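/- arXiv:1710.04865 — 3 statements merged into one kernel-verified Lean document; each statement's English description precedes it below -/
import Mathlib

section
/- Let l and t be coprime odd integers with l > t ≥ 1 and set p' = (l−1)/2. For 1 ≤ j ≤ p', let r(j) be the unique integer with r(j) ≡ (2j−1)t (mod 2l) and −l < r(j) < l, and set r'(j) = (|r(j)|+1)/2. Then r'(j) ∈ {1, …, p'} for every 1 ≤ j ≤ p', and the map j ↦ r'(j) is a bijection of {1, …, p'} onto itself. -/
open Finset

noncomputable section

/-- The q-Pochhammer symbol `(a; q)_n = ∏_{k=0}^{n-1} (1 - a q^k)`. -/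
def qPoch (a q : ℂ) (n : ℕ) : ℂ := ∏ k ∈ Finset.range n, (1 - a * q ^ k)

/-- The Gaussian binomial coefficient `[n; k]_q` as a polynomial in `q` over `ℤ`,
defined by the q-Pascal rule `[n; k] = [n-1; k-1] + q^k [n-1; k]`.  It is the
polynomial equal to `(q;q)_n / ((q;q)_{n-k} (q;q)_k)`. -/
def gaussPoly : ℕ → ℕ → Polynomial ℤ
  | _, 0 => 1
  | 0, _ + 1 => 0
  | n + 1, k + 1 => gaussPoly n k + Polynomial.X ^ (k + 1) * gaussPoly n (k + 1)

/-- The Gaussian binomial coefficient `[n; k]_q` evaluated at `q : ℂ`. -/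
def gbin (q : ℂ) (n k : ℕ) : ℂ := Polynomial.aeval q (gaussPoly n k)

/-- `σ_j = (-1)^⌊(2j-1)t/l⌋`. -/
def sigmaT (l t j : ℕ) : ℤ := (-1) ^ ((2 * j - 1) * t / l)

/-- `r(j)`: the unique integer with `r(j) ≡ (2j-1)t (mod 2l)` and `-l < r(j) < l`. -/
def rT (l t j : ℕ) : ℤ :=
  if (((2 * j - 1) * t % (2 * l) : ℕ) : ℤ) < (l : ℤ) then (((2 * j - 1) * t % (2 * l) : ℕ) : ℤ)
  else (((2 * j - 1) * t % (2 * l) : ℕ) : ℤ) - 2 * (l : ℤ)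

/-- `r'(j) = (|r(j)| + 1)/2`. -/
def rpT (l t j : ℕ) : ℕ := ((rT l t j).natAbs + 1) / 2

open Classical in
/-- `i_k`: the unique `j ∈ {1, …, (l-1)/2}` with `r'(j) = k`. -/
def iT (l t k : ℕ) : ℕ :=
  if h : ∃ j, j ∈ Finset.Icc 1 ((l - 1) / 2) ∧ rpT l t j = k then h.choose else 0

/-- `ε_{i,j,m}`: `1` if `j ≡ -i, -i-1 (mod 2m)`, `-1` if `j ≡ i, i-1 (mod 2m)`,
`0` otherwise (and `0` when `m ∣ i`, a case excluded in all uses). -/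
def epsLO (m i j : ℕ) : ℤ :=
  if m ∣ i then 0
  else if 2 * m ∣ (i + j) ∨ 2 * m ∣ (i + j + 1) then 1
  else if (2 * (m : ℤ)) ∣ ((j : ℤ) - (i : ℤ)) ∨ (2 * (m : ℤ)) ∣ ((j : ℤ) - (i : ℤ) + 1) then -1
  else 0

/-- `Δ_{i,j,m}`: `1` if `j ≡ -i, -i+1 (mod 2m)`, `-1` if `j ≡ i, i+1 (mod 2m)`,
`0` otherwise (and `0` when `m ∣ i`, a case excluded in all uses). -/
def deltaLO (m i j : ℕ) : ℤ :=
  if m ∣ i then 0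
  else if 2 * m ∣ (i + j) ∨ 2 * m ∣ (i + j - 1) then 1
  else if (2 * (m : ℤ)) ∣ ((j : ℤ) - (i : ℤ)) ∨ (2 * (m : ℤ)) ∣ ((j : ℤ) - (i : ℤ) - 1) then -1
  else 0

/-- `γ_{i,m} = 1` if `i ≡ 1, …, m-1 (mod 2m)` and `-1` otherwise. -/
def gamLO (m i : ℕ) : ℤ :=
  if 1 ≤ i % (2 * m) ∧ i % (2 * m) ≤ m - 1 then 1 else -1

/-- `β_{i,m} = 1` if `i ≡ 1, …, m-1 (mod 2m)`, `-1` if `i ≡ m+1, …, 2m-1 (mod 2m)`,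
and `0` if `m ∣ i`. -/
def betLO (m i : ℕ) : ℤ :=
  if 1 ≤ i % (2 * m) ∧ i % (2 * m) ≤ m - 1 then 1
  else if m + 1 ≤ i % (2 * m) ∧ i % (2 * m) ≤ 2 * m - 1 then -1
  else 0

/-- Extend a tuple `f : Fin P → Fin N` to `n : ℕ → ℕ` with `n i = f (i-1)` for
`1 ≤ i ≤ P` and `n i = 0` otherwise (in particular `n 0 = 0`). -/
def extTup (P N : ℕ) (f : Fin P → Fin N) : ℕ → ℕ :=
  fun i => if h : 1 ≤ i ∧ i ≤ P then (f ⟨i - 1, by omega⟩ : ℕ) else 0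

/-- Takata's exponent `a(n)` (an integer; every integer division below is exact). -/
def aT (l t : ℕ) (n : ℕ → ℕ) : ℤ :=
  -(∑ j ∈ Icc 1 ((l - 1) / 2), (∑ k ∈ Icc (rpT l t j) ((l - 1) / 2),
      (sigmaT l t (iT l t k) + sigmaT l t (iT l t ((l - 1) / 2 + 1 - k))) / 2) *
      ((n j : ℤ) - (n (j - 1) : ℤ)))
  - ∑ j ∈ Icc 1 ((l - 1) / 2 - 1), ((sigmaT l t (j + 1) + sigmaT l t ((l - 1) / 2 + 1 - j)) / 2) * (n j : ℤ)
  - ((sigmaT l t ((l - 1) / 2) + 1) / 2) * (n ((l - 1) / 2) : ℤ)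
  - ∑ j ∈ Icc 1 ((l - 1) / 2), sigmaT l t j

/-- Takata's exponent `b₁(n)` (an integer; every integer division below is exact
whenever the factor it multiplies is nonzero). -/
def b1T (l t : ℕ) (n : ℕ → ℕ) : ℤ :=
  -aT l t n
  + ∑ k ∈ Icc 1 ((l - t) / 2), ((1 - sigmaT l t (iT l t k)) / 2) * (n (iT l t k - 1) : ℤ)
  - ∑ k ∈ Icc ((l - t) / 2 + 1) ((l - 1) / 2), (n (iT l t k - 1) : ℤ)
  + ∑ k ∈ Icc ((l - t) / 2 + 1) ((l - 1) / 2), ((1 + sigmaT l t (iT l t k)) / 2) * (n (iT l t k) : ℤ)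
  - (1 + sigmaT l t ((l - 1) / 2)) * (n ((l - 1) / 2) : ℤ)
  + ∑ j ∈ Icc 1 ((l - 1) / 2 - 1), ((sigmaT l t (j + 1) - sigmaT l t j) / 2) * (n j : ℤ)
  - ∑ k ∈ Icc 1 ((l - 1) / 2 - 1), ∑ k' ∈ Icc (k + 1) ((l - 1) / 2),
      ((1 + Int.sign ((iT l t k : ℤ) - (iT l t k' : ℤ))) / 2) *
        ((sigmaT l t (iT l t k) - sigmaT l t (iT l t k')) / 2) *
        ((n (iT l t k) : ℤ) - (n (iT l t k - 1) : ℤ)) *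
        ((n (iT l t k') : ℤ) - (n (iT l t k' - 1) : ℤ))
  + ∑ j ∈ Icc 1 ((l - 1) / 2), sigmaT l t j *
      (∑ k ∈ Icc 1 (rpT l t j), ((n (iT l t k) : ℤ) - (n (iT l t k - 1) : ℤ))) * (n (j - 1) : ℤ)

/-- Takata's exponent `b₂(n)`. -/
def b2T (l t : ℕ) (n : ℕ → ℕ) : ℤ :=
  if l < 2 * t then
    ∑ k ∈ Icc ((l - t) / 2 + 1) ((t - 1) / 2),
      ((1 + sigmaT l t (iT l t k)) / 2) * (n (iT l t k - 1) : ℤ)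
  else
    -∑ k ∈ Icc ((t + 1) / 2 + 1) ((l - t) / 2),
      ((1 + sigmaT l t (iT l t k)) / 2) * (n (iT l t k - 1) : ℤ)

/-- Takata's `κ(p')`. -/
def kapT (l t N : ℕ) (n : ℕ → ℕ) : ℤ :=
  if sigmaT l t ((l - 1) / 2) = -1 then -(N : ℤ) * (n ((l - 1) / 2) : ℤ) else 0

/-- Takata's `τ(j)`. -/
def tauT (l t : ℕ) (q : ℂ) (n : ℕ → ℕ) (j : ℕ) : ℂ :=
  if sigmaT l t j = -1 then (-1 : ℂ) ^ (n j - n (j - 1))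
  else q ^ ((((n j : ℤ) - (n (j - 1) : ℤ)) * (((n j : ℤ) - (n (j - 1) : ℤ)) + 1)) / 2)

/-- Takata's `X(n)`. -/
def XT (l t N : ℕ) (q : ℂ) (n : ℕ → ℕ) : ℂ :=
  (-1 : ℂ) ^ (n ((l - 1) / 2)) * q ^ kapT l t N n *
    (qPoch q q (N - 1) * qPoch q q (n ((l - 1) / 2)) / qPoch q q (N - n ((l - 1) / 2) - 1)) *
    ∏ j ∈ Icc 1 ((l - 1) / 2), tauT l t q n j / qPoch q q (n j - n (j - 1))

/-!
This is the argument of Gauss's lemma: `r(j)` is the residue of `(2j-1)t` modulo `2l` of least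
absolute value. If `|r(i)| = |r(j)|`, then `(2i-1)t ≡ ±(2j-1)t` modulo `2l`, so `l` divides
`(i-j)t` or `(i+j-1)t`, hence `i-j` or `i+j-1`. Since `1 ≤ i, j ≤ p'`, both have absolute
value less than `l` and the second is positive, so `i = j`. Similarly `l` does not divide `2j-1`,
so `0 < |r(j)| < l`. All the `r(j)` have the same parity, so `|r(j)|` can be recovered from
`r'(j)`. Thus `r'` is an injective self-map of a finite set.
-/

section BalancedMod

variable {a b : ℤ} {d n : ℕ}

theorem dvd_bmod_iff (h : d ∣ n) : (d : ℤ) ∣ a.bmod n ↔ (d : ℤ) ∣ a := by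
  rw [Int.dvd_iff_bmod_eq_zero, Int.bmod_bmod_of_dvd h, ← Int.dvd_iff_bmod_eq_zero]

theorem natAbs_bmod_two_mul_le (hd : 0 < d) : (a.bmod (2 * d)).natAbs ≤ d := by
  have hlower := Int.le_bmod (x := a) (m := 2 * d) (by omega)
  have hupper := Int.bmod_le (x := a) (m := 2 * d) (by omega)
  omega

theorem dvd_sub_or_dvd_add_of_natAbs_bmod_eq (h : (a.bmod n).natAbs = (b.bmod n).natAbs) :
    (n : ℤ) ∣ a - b ∨ (n : ℤ) ∣ a + b := by
  have ha : (n : ℤ) ∣ a - a.bmod n := Int.dvd_self_sub_bmod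
  have hb : (n : ℤ) ∣ b - b.bmod n := Int.dvd_self_sub_bmod
  rcases Int.natAbs_eq_natAbs_iff.mp h with h | h
  · left
    simpa [h] using ha.sub hb
  · right
    simpa [h] using ha.add hb

end BalancedMod

section Residue

variable {l t i j : ℕ}

theorem rT_eq_bmod (hj : 1 ≤ j) : rT l t j = ((2 * j - 1 : ℤ) * t).bmod (2 * l) := by
  have hcast : ((2 * j - 1 : ℤ) * t) = ((2 * j - 1) * t : ℕ) := by
    push_cast [show 1 ≤ 2 * j by omega]
    ring
  rw [hcast, Int.bmod_def, ← Int.natCast_mod, rT]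
  split_ifs <;> omega

theorem even_rT_iff (hj : 1 ≤ j) : Even (rT l t j) ↔ Even t := by
  have hodd : ¬ Even (2 * j - 1 : ℤ) := by grind
  have hdvd : (2 : ℤ) ∣ rT l t j ↔ (2 : ℤ) ∣ (2 * j - 1) * t := by
    rw [rT_eq_bmod hj]
    exact dvd_bmod_iff (Dvd.intro l rfl)
  rw [even_iff_two_dvd, hdvd, ← even_iff_two_dvd, Int.even_mul, Int.even_coe_nat]
  exact or_iff_right hodd

theorem not_dvd_rT (hco : l.Coprime t) (hj : 1 ≤ j) (hjl : j ≤ l / 2) : ¬ (l : ℤ) ∣ rT l t j := by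
  rw [rT_eq_bmod hj, dvd_bmod_iff (Dvd.intro_left 2 rfl)]
  intro hprod
  have hdvd : (l : ℤ) ∣ 2 * j - 1 := hco.isCoprime.dvd_of_dvd_mul_right hprod
  have hle := Int.le_of_dvd (by omega) hdvd
  omega

theorem natAbs_rT_pos (hco : l.Coprime t) (hj : 1 ≤ j) (hjl : j ≤ l / 2) :
    0 < (rT l t j).natAbs := by
  refine Int.natAbs_pos.mpr fun h ↦ not_dvd_rT hco hj hjl ?_
  exact h ▸ dvd_zero _

theorem natAbs_rT_lt (hco : l.Coprime t) (hj : 1 ≤ j) (hjl : j ≤ l / 2) :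
    (rT l t j).natAbs < l := by
  have hle : (rT l t j).natAbs ≤ l := by
    rw [rT_eq_bmod hj]
    exact natAbs_bmod_two_mul_le (by omega)
  refine hle.lt_of_ne fun h ↦ not_dvd_rT hco hj hjl ?_
  exact Int.natCast_dvd.mpr h.symm.dvd

theorem injOn_natAbs_rT (hco : l.Coprime t) :
    Set.InjOn (fun j ↦ (rT l t j).natAbs) (Set.Icc 1 (l / 2)) := by
  rintro i ⟨hi, hil⟩ j ⟨hj, hjl⟩ hij
  have hcancel {c : ℤ} (h : ((2 * l : ℕ) : ℤ) ∣ 2 * (c * t)) : (l : ℤ) ∣ c := by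
    rw [Nat.cast_mul, Nat.cast_ofNat, mul_dvd_mul_iff_left two_ne_zero] at h
    exact hco.isCoprime.dvd_of_dvd_mul_right h
  simp only [rT_eq_bmod hi, rT_eq_bmod hj] at hij
  rcases dvd_sub_or_dvd_add_of_natAbs_bmod_eq hij with h | h
  · have hdvd : (l : ℤ) ∣ i - j := hcancel (by convert h using 1; ring)
    have hzero := Int.eq_zero_of_abs_lt_dvd hdvd (by rw [abs_lt]; omega)
    omega
  · have hdvd : (l : ℤ) ∣ i + j - 1 := hcancel (by convert h using 1; ring)
    have hle := Int.le_of_dvd (by omega) hdvd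
    omega

theorem rpT_eq_rpT_iff (hi : 1 ≤ i) (hj : 1 ≤ j) :
    rpT l t i = rpT l t j ↔ (rT l t i).natAbs = (rT l t j).natAbs := by
  have hparity : Even (rT l t i).natAbs ↔ Even (rT l t j).natAbs := by
    rw [Int.natAbs_even, Int.natAbs_even, even_rT_iff hi, even_rT_iff hj]
  rw [Nat.even_iff, Nat.even_iff] at hparity
  unfold rpT
  omega

theorem mapsTo_rpT (hl : Odd l) (hco : l.Coprime t) :
    Set.MapsTo (rpT l t) (Set.Icc 1 (l / 2)) (Set.Icc 1 (l / 2)) := by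
  rintro j ⟨hj, hjl⟩
  have hpos := natAbs_rT_pos hco hj hjl
  have hlt := natAbs_rT_lt hco hj hjl
  rw [Nat.odd_iff] at hl
  rw [Set.mem_Icc, rpT]
  omega

theorem injOn_rpT (hco : l.Coprime t) : Set.InjOn (rpT l t) (Set.Icc 1 (l / 2)) :=
  fun _ hi _ hj hij ↦ injOn_natAbs_rT hco hi hj ((rpT_eq_rpT_iff hi.1 hj.1).mp hij)

-- For even `t`, `r(j)` is even and the quotient defining `rpT` rounds down to `|r(j)| / 2`.
theorem rp_bijOn_general (hl : Odd l) (hco : l.Coprime t) :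
    Set.BijOn (rpT l t) (Set.Icc 1 ((l - 1) / 2)) (Set.Icc 1 ((l - 1) / 2)) := by
  have hhalf : (l - 1) / 2 = l / 2 := by grind
  rw [hhalf]
  exact ((Set.finite_Icc _ _).injOn_iff_bijOn_of_mapsTo (mapsTo_rpT hl hco)).mp (injOn_rpT hco)

end Residue

/-- The map `j ↦ r'(j)` is a bijection of `{1, …, p'}` onto itself. -/
theorem rp_bijOn
    (l t : ℕ) (hl : Odd l) (ht : Odd t) (hco : Nat.Coprime l t)
    (ht1 : 1 ≤ t) (htl : t < l) :
    (∀ j, 1 ≤ j → j ≤ (l - 1) / 2 → rpT l t j ∈ Finset.Icc 1 ((l - 1) / 2)) ∧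
    Set.BijOn (rpT l t) (Set.Icc 1 ((l - 1) / 2)) (Set.Icc 1 ((l - 1) / 2)) := by
  have hbij := rp_bijOn_general hl hco
  exact ⟨fun j hj hjl ↦ Finset.mem_Icc.mpr (hbij.mapsTo ⟨hj, hjl⟩), hbij⟩

end
end

section
/- Let m ≥ 2 and p ≥ 1 be integers and let n_1, …, n_{2mp−1} be integers, with the convention n_s = 0 for every index s ≤ 0. Then the following expression E: E = Σ_{j=1}^{p} Σ_{j'=1}^{j} Σ_{k=1}^{m−1} Σ_{k'=1}^{k} (n_{2mj−k} − n_{2mj−k−1})(n_{2mj'−2m+k−k'+1} − n_{2mj'−2m+k−k'}) − Σ_{j=1}^{p} Σ_{j'=1}^{j} Σ_{k=1}^{m} Σ_{k'=1}^{m−k+1} (n_{2mj−m−k+1} − n_{2mj−m−k})(n_{2mj'−2m−k'+1} − n_{2mj'−2m−k'}) + Σ_{s=1}^{m−1} Σ_{j=1}^{p} ( Σ_{j'=1}^{j−1} (n_{2mj'−s} − n_{2mj'−2m+s}) + Σ_{j'=j}^{p} (n_{2mj'−s} − n_{2mj'−2m+s−1}) ) n_{2mj−2m+s−1} + Σ_{j=1}^{p}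 ( Σ_{j'=j}^{p} (n_{2mj'−m} − n_{2mj'−m−1}) ) n_{2mj−m−1} − Σ_{j=1}^{p−1} ( Σ_{j'=j+1}^{p} (n_{2mj'−1} − n_{2mj'−2m}) + n_{2mj} ) n_{2mj−1} − Σ_{s=1}^{m−1} Σ_{j=1}^{p} ( Σ_{j'=1}^{j} (n_{2mj'−m+s} − n_{2mj'−m−s}) + Σ_{j'=j+1}^{p} (n_{2mj'−m+s−1} − n_{2mj'−m−s}) ) n_{2mj−m+s−1} + Σ_{j=1}^{p} [ n_{2mj−2m+1}(n_{2mj−2m+1}+1)/2 − n_{2mj−2m+1} n_{2mj−2m} + n_{2mj−m−1}(n_{2mj−m−1}−1)/2 − n_{2mj−m} n_{2mj−m−1} + (1/2) Σ_{s=2}^{m−1} (n_{2mj−2m+s} − n_{2mj−2m+s−1})(n_{2mj−2m+s} − n_{2mj−2m+s−1} + 1) ] satisfies E = Σ_{1 ≤ i < j ≤ 2mp−1, m ∤ i} ε_{i,j,m} n_i n_j − Σ_{i=1}^{2mp−2} n_i n_{i+1}. -/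
open Finset

noncomputable section

/-!
Cut the sequence into blocks of length `2m` and read each block inwards from both ends: the entries
`x k = n (2mJ + k)` and `y k = n (2m(J + 1) - k)` of block `J` meet at `k = m`. Since `ε_{i,j,m}`
depends only on the residues of `i` and `j` modulo `2m`, a block with entries `x`, `y` and a later
block with entries `z`, `w` contribute
`∑_{k=1}^{m-1} (y k - x k) * (z (k - 1) + z k - w k - w (k + 1))` to the `ε`-form, and each block
contributes `∑_{k=1}^{m-1} x k * (y k + y (k + 1))` on its own. On the other side, the innermost
sums of the quadruple sums telescope, and exchanging `j` and `j'` turns every term into a sum over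
pairs of blocks. It then suffices to compare the contributions of each pair of distinct blocks and
of each single block, two identities that follow by induction on `m`.
-/

section FinsetSums

variable {A : Type*} [AddCommMonoid A]

lemma sum_Icc_one_eq_sum_range (f : ℕ → A) (N : ℕ) :
    ∑ i ∈ Icc 1 N, f i = ∑ i ∈ range N, f (i + 1) := by
  rw [← Finset.Ico_add_one_right_eq_Icc, sum_Ico_eq_sum_range, Nat.add_sub_cancel]
  simp only [add_comm]

lemma sum_Ioo_zero_eq_sum_range {f : ℕ → A} (hf : f 0 = 0) (N : ℕ) :
    ∑ i ∈ Ioo 0 N, f i = ∑ i ∈ range N, f i := by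
  refine sum_subset (fun i hi => mem_range.2 (mem_Ioo.1 hi).2) fun i hi hi' => ?_
  obtain rfl : i = 0 := by
    simp only [mem_range, mem_Ioo] at hi hi'
    omega
  exact hf

lemma sum_Icc_sum_Icc_comm (f : ℕ → ℕ → A) (p : ℕ) :
    ∑ j ∈ Icc 1 p, ∑ j' ∈ Icc j p, f j j' = ∑ j' ∈ Icc 1 p, ∑ j ∈ Icc 1 j', f j j' :=
  sum_comm' fun _ _ => by simp only [mem_Icc]; omega

lemma sum_Icc_sum_Icc_succ_comm (f : ℕ → ℕ → A) (p : ℕ) :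
    ∑ j ∈ Icc 1 p, ∑ j' ∈ Icc (j + 1) p, f j j' =
      ∑ j' ∈ Icc 1 p, ∑ j ∈ Icc 1 (j' - 1), f j j' :=
  sum_comm' fun _ _ => by simp only [mem_Icc]; omega

lemma sum_Icc_pred_sum_Icc_succ_comm (f : ℕ → ℕ → A) (p : ℕ) :
    ∑ j ∈ Icc 1 (p - 1), ∑ j' ∈ Icc (j + 1) p, f j j' =
      ∑ j' ∈ Icc 1 p, ∑ j ∈ Icc 1 (j' - 1), f j j' :=
  sum_comm' fun _ _ => by simp only [mem_Icc]; omega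

lemma sum_range_sum_Ioo_comm (f : ℕ → ℕ → A) (N : ℕ) :
    ∑ i ∈ range N, ∑ j ∈ Ioo i N, f i j = ∑ j ∈ range N, ∑ i ∈ range j, f i j :=
  sum_comm' fun _ _ => by simp only [mem_Ioo, mem_range]; omega

lemma sum_range_mul_eq_sum_blocks (f : ℕ → A) (d p : ℕ) :
    ∑ i ∈ range (d * p), f i = ∑ J ∈ range p, ∑ r ∈ range d, f (d * J + r) := by
  induction p with
  | zero => simp
  | succ p ih => rw [mul_add, mul_one, sum_range_add, ih, sum_range_succ]

lemma sum_range_mul_sum_Ioo_eq_sum_blocks (f : ℕ → ℕ → A) (d p : ℕ) :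
    ∑ i ∈ range (d * p), ∑ j ∈ Ioo i (d * p), f i j =
      ∑ K ∈ range p,
        (∑ J ∈ range K, ∑ t ∈ range d, ∑ r ∈ range d, f (d * J + t) (d * K + r)
          + ∑ t ∈ range d, ∑ r ∈ Ioo t d, f (d * K + t) (d * K + r)) := by
  rw [sum_range_sum_Ioo_comm, sum_range_mul_eq_sum_blocks]
  refine sum_congr rfl fun K _ => ?_
  simp only [sum_range_add, sum_range_mul_eq_sum_blocks, sum_add_distrib]
  rw [sum_range_sum_Ioo_comm fun t r => f (d * K + t) (d * K + r), sum_comm]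
  congr 1
  exact sum_congr rfl fun J _ => sum_comm

lemma sum_range_two_mul_eq_sum_mirror {m : ℕ} (hm : 0 < m) (f : ℕ → A) :
    ∑ t ∈ range (2 * m), f t =
      f 0 + f m + ∑ k ∈ range (m - 1), (f (k + 1) + f (2 * m - (k + 1))) := by
  obtain ⟨M, rfl⟩ : ∃ M, m = M + 1 := ⟨m - 1, by omega⟩
  have upper_half : ∑ k ∈ range M, f (M + 1 + (k + 1)) =
      ∑ k ∈ range M, f (2 * (M + 1) - (k + 1)) := by
    rw [← sum_range_reflect]
    refine sum_congr rfl fun k hk => congrArg f ?_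
    have := mem_range.1 hk
    omega
  rw [two_mul, sum_range_add, sum_range_succ', sum_range_succ' (fun x => f (M + 1 + x)),
    upper_half, ← two_mul, Nat.add_sub_cancel, sum_add_distrib, add_zero]
  abel

lemma sum_Icc_one_telescope {G : Type*} [AddCommGroup G] (n : ℤ → G) (c : ℤ) (k : ℕ) :
    ∑ i ∈ Icc 1 k, (n (c - i + 1) - n (c - i)) = n c - n (c - k) := by
  induction k with
  | zero => simp
  | succ k ih =>
    rw [sum_Icc_succ_top (by omega), ih]
    push_cast
    rw [show c - ((k : ℤ) + 1) + 1 = c - k by ring]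
    abel

end FinsetSums

section EpsLO

lemma epsLO_of_dvd {m i : ℕ} (h : m ∣ i) (j : ℕ) : epsLO m i j = 0 :=
  if_pos h

lemma epsLO_two_mul_mul_add (m J K i j : ℕ) :
    epsLO m (2 * m * J + i) (2 * m * K + j) = epsLO m i j := by
  have dvd_index : m ∣ 2 * m * J + i ↔ m ∣ i := Nat.dvd_add_right ⟨2 * J, by ring⟩
  have dvd_sum (c : ℕ) : 2 * m ∣ 2 * m * J + i + (2 * m * K + j) + c ↔ 2 * m ∣ i + j + c := by
    rw [show 2 * m * J + i + (2 * m * K + j) + c = 2 * m * (J + K) + (i + j + c) by ring]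
    exact Nat.dvd_add_right (dvd_mul_right _ _)
  have dvd_diff (c : ℤ) : 2 * (m : ℤ) ∣ (2 * m * K + j : ℕ) - (2 * m * J + i : ℕ) + c ↔
      2 * (m : ℤ) ∣ j - i + c := by
    rw [show ((2 * m * K + j : ℕ) : ℤ) - (2 * m * J + i : ℕ) + c =
      2 * m * (K - J) + (j - i + c) by push_cast; ring]
    exact dvd_add_right (dvd_mul_right _ _)
  have dvd_sum_zero := dvd_sum 0
  have dvd_diff_zero := dvd_diff 0
  simp only [add_zero] at dvd_sum_zero dvd_diff_zero
  simp only [epsLO, dvd_index, dvd_sum_zero, dvd_sum 1, dvd_diff_zero, dvd_diff 1]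

lemma epsLO_of_lt {m i j : ℕ} (hi : 0 < i) (him : i ≠ m) (hi' : i < 2 * m) (hj : j < 2 * m) :
    epsLO m i j =
      (if j = 2 * m - i then 1 else 0) + (if j = 2 * m - i - 1 then 1 else 0)
        - (if j = i then 1 else 0) - (if j = i - 1 then 1 else 0) := by
  have not_dvd : ¬ m ∣ i := fun h => him (Nat.eq_of_dvd_of_lt_two_mul hi.ne' h hi')
  have dvd_sum {c : ℕ} (h0 : 0 < c) (hc : c < 2 * (2 * m)) : 2 * m ∣ c ↔ c = 2 * m :=
    ⟨fun h => Nat.eq_of_dvd_of_lt_two_mul h0.ne' h hc, fun h => h ▸ dvd_rfl⟩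
  have dvd_diff {c : ℤ} (hc : |c| < 2 * m) : 2 * (m : ℤ) ∣ c ↔ c = 0 :=
    ⟨fun h => Int.eq_zero_of_abs_lt_dvd h hc, fun h => h ▸ dvd_zero _⟩
  simp only [epsLO, if_neg not_dvd, dvd_sum (show 0 < i + j by omega) (by omega),
    dvd_sum (show 0 < i + j + 1 by omega) (by omega),
    dvd_diff (show |(j : ℤ) - i| < 2 * m by rw [abs_lt]; omega),
    dvd_diff (show |(j : ℤ) - i + 1| < 2 * m by rw [abs_lt]; omega)]
  split_ifs <;> omega

variable {R : Type*} [CommRing R]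

lemma sum_range_epsLO_mul {m t : ℕ} (ht : 0 < t) (htm : t ≠ m) (ht' : t < 2 * m) (f : ℕ → R) :
    ∑ r ∈ range (2 * m), (epsLO m t r : R) * f r =
      f (2 * m - t) + f (2 * m - t - 1) - f t - f (t - 1) := by
  rw [sum_congr rfl fun r hr => by rw [epsLO_of_lt ht htm ht' (mem_range.1 hr)]]
  push_cast
  simp only [sub_mul, add_mul, ite_mul, one_mul, zero_mul, sum_sub_distrib, sum_add_distrib,
    sum_ite_eq', mem_range]
  rw [if_pos (by omega), if_pos (by omega), if_pos (by omega), if_pos (by omega)]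

lemma sum_Ioo_epsLO_mul_of_lt {m t : ℕ} (ht : 0 < t) (htm : t < m) (f : ℕ → R) :
    ∑ r ∈ Ioo t (2 * m), (epsLO m t r : R) * f r = f (2 * m - t) + f (2 * m - t - 1) := by
  rw [sum_congr rfl fun r hr => by
    rw [epsLO_of_lt ht htm.ne (by omega) (mem_Ioo.1 hr).2]]
  push_cast
  simp only [sub_mul, add_mul, ite_mul, one_mul, zero_mul, sum_sub_distrib, sum_add_distrib,
    sum_ite_eq', mem_Ioo]
  rw [if_pos (by omega), if_pos (by omega), if_neg (by omega), if_neg (by omega), sub_zero,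
    sub_zero]

lemma sum_Ioo_epsLO_mul_of_gt {m t : ℕ} (htm : m < t) (ht : t < 2 * m) (f : ℕ → R) :
    ∑ r ∈ Ioo t (2 * m), (epsLO m t r : R) * f r = 0 := by
  refine sum_eq_zero fun r hr => ?_
  obtain ⟨htr, hr⟩ := mem_Ioo.1 hr
  rw [epsLO_of_lt (by omega) htm.ne' ht hr, if_neg (by omega), if_neg (by omega),
    if_neg (by omega), if_neg (by omega)]
  simp

lemma sum_range_sum_range_epsLO {m : ℕ} (hm : 0 < m) (f g : ℕ → R) :
    ∑ t ∈ range (2 * m), ∑ r ∈ range (2 * m), (epsLO m t r : R) * f t * g r =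
      ∑ k ∈ range (m - 1), (f (2 * m - (k + 1)) - f (k + 1)) *
        (g k + g (k + 1) - g (2 * m - (k + 1)) - g (2 * m - (k + 2))) := by
  simp only [mul_right_comm _ (f _), ← sum_mul]
  rw [sum_range_two_mul_eq_sum_mirror hm]
  simp only [epsLO_of_dvd (dvd_zero m), epsLO_of_dvd (dvd_refl m), Int.cast_zero, zero_mul,
    sum_const_zero, zero_add]
  refine sum_congr rfl fun k hk => ?_
  have := mem_range.1 hk
  rw [sum_range_epsLO_mul (by omega) (by omega) (by omega),
    sum_range_epsLO_mul (by omega) (by omega) (by omega), Nat.sub_sub_self (by omega),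
    Nat.sub_sub, Nat.add_sub_cancel]
  ring

lemma sum_range_sum_Ioo_epsLO {m : ℕ} (hm : 0 < m) (f g : ℕ → R) :
    ∑ t ∈ range (2 * m), ∑ r ∈ Ioo t (2 * m), (epsLO m t r : R) * f t * g r =
      ∑ k ∈ range (m - 1), f (k + 1) * (g (2 * m - (k + 1)) + g (2 * m - (k + 2))) := by
  simp only [mul_right_comm _ (f _), ← sum_mul]
  rw [sum_range_two_mul_eq_sum_mirror hm]
  simp only [epsLO_of_dvd (dvd_zero m), epsLO_of_dvd (dvd_refl m), Int.cast_zero, zero_mul,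
    sum_const_zero, zero_add]
  refine sum_congr rfl fun k hk => ?_
  have := mem_range.1 hk
  rw [sum_Ioo_epsLO_mul_of_lt (by omega) (by omega),
    sum_Ioo_epsLO_mul_of_gt (by omega) (by omega), Nat.sub_sub]
  ring

lemma sum_filter_not_dvd_epsLO (m N : ℕ) (f : ℕ → R) :
    ∑ i ∈ (Icc 1 (N - 1)).filter (fun i => ¬ m ∣ i), ∑ j ∈ Icc (i + 1) (N - 1),
        (epsLO m i j : R) * f i * f j =
      ∑ i ∈ range N, ∑ j ∈ Ioo i N, (epsLO m i j : R) * f i * f j := by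
  have inner_eq_zero {i : ℕ} (hi : m ∣ i) :
      ∑ j ∈ Ioo i N, (epsLO m i j : R) * f i * f j = 0 := by
    simp [epsLO_of_dvd hi]
  have Icc_eq_Ioo (i : ℕ) : Icc (i + 1) (N - 1) = Ioo i N := by
    ext j
    simp only [mem_Icc, mem_Ioo]
    omega
  simp only [Icc_eq_Ioo]
  rw [sum_filter_of_ne fun i _ => mt inner_eq_zero,
    sum_Ioo_zero_eq_sum_range (inner_eq_zero (dvd_zero m))]

end EpsLO

section Blocks

variable {R : Type*}

/-- The sequence is cut into blocks of length `2 * m`; this is the entry `k` places after the left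
end `2 * m * J` of block `J`, where blocks are numbered from `0`. -/
def blockLeft (m : ℕ) (n : ℤ → R) (J k : ℕ) : R := n (2 * m * J + k)

/-- The entry `k` places before the right end `2 * m * (J + 1)` of block `J`, which is also the left
end of block `J + 1`. -/
def blockRight (m : ℕ) (n : ℤ → R) (J k : ℕ) : R := n (2 * m * (J + 1) - k)

lemma blockLeft_two_mul_sub {m k : ℕ} (hk : k ≤ 2 * m) (n : ℤ → R) (J : ℕ) :
    blockLeft m n J (2 * m - k) = blockRight m n J k := by
  unfold blockLeft blockRight
  push_cast [hk]
  ring_nf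

lemma blockRight_self (m : ℕ) (n : ℤ → R) (J : ℕ) : blockRight m n J m = blockLeft m n J m := by
  rw [← blockLeft_two_mul_sub (by omega), two_mul, Nat.add_sub_cancel]

variable [CommRing R]

lemma sum_epsLO_eq_sum_blocks {m : ℕ} (hm : 0 < m) (p : ℕ) (n : ℤ → R) :
    ∑ i ∈ (Icc 1 (2 * m * p - 1)).filter (fun i => ¬ m ∣ i), ∑ j ∈ Icc (i + 1) (2 * m * p - 1),
        (epsLO m i j : R) * n i * n j =
      ∑ K ∈ range p, (∑ J ∈ range K, ∑ k ∈ range (m - 1),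
          (blockRight m n J (k + 1) - blockLeft m n J (k + 1)) *
            (blockLeft m n K k + blockLeft m n K (k + 1)
              - blockRight m n K (k + 1) - blockRight m n K (k + 2))
        + ∑ k ∈ range (m - 1), blockLeft m n K (k + 1) *
            (blockRight m n K (k + 1) + blockRight m n K (k + 2))) := by
  have entry_eq (J t : ℕ) : n (2 * m * J + t : ℕ) = blockLeft m n J t := by
    unfold blockLeft
    push_cast
    rfl
  rw [sum_filter_not_dvd_epsLO m _ fun i => n i, sum_range_mul_sum_Ioo_eq_sum_blocks]
  simp only [epsLO_two_mul_mul_add, entry_eq, sum_range_sum_range_epsLO hm,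
    sum_range_sum_Ioo_epsLO hm]
  refine sum_congr rfl fun K _ => congrArg₂ _
    (sum_congr rfl fun J _ => sum_congr rfl fun k hk => ?_) (sum_congr rfl fun k hk => ?_)
  all_goals
    have := mem_range.1 hk
    simp only [blockLeft_two_mul_sub (show k + 1 ≤ 2 * m by omega),
      blockLeft_two_mul_sub (show k + 2 ≤ 2 * m by omega)]

lemma sum_Icc_mul_succ_eq_sum_range {n : ℤ → R} (h0 : n 0 = 0) (N : ℕ) :
    ∑ i ∈ Icc 1 (N - 2), n i * n (i + 1) = ∑ i ∈ range N, n i * n (i - 1) := by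
  match N with
  | 0 => simp
  | 1 => simp [h0]
  | N + 2 =>
    rw [Nat.add_sub_cancel, sum_Icc_one_eq_sum_range, sum_range_succ', sum_range_succ']
    simp [h0, mul_comm]

lemma sum_mul_succ_eq_sum_blocks {m : ℕ} (hm : 0 < m) (p : ℕ) {n : ℤ → R} (h0 : n 0 = 0) :
    ∑ i ∈ Icc 1 (2 * m * p - 2), n i * n (i + 1) =
      ∑ J ∈ range p, (∑ k ∈ range m, blockLeft m n J k * blockLeft m n J (k + 1)
        + ∑ k ∈ range (m - 1), blockRight m n J (k + 1) * blockRight m n J (k + 2)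
        + n (2 * m * J) * n (2 * m * J - 1)) := by
  rw [sum_Icc_mul_succ_eq_sum_range h0, sum_range_mul_eq_sum_blocks]
  refine sum_congr rfl fun J _ => ?_
  rw [show 2 * m = m + (m - 1) + 1 by omega, sum_range_succ', sum_range_add,
    ← sum_range_reflect _ (m - 1), show m + (m - 1) + 1 = 2 * m by omega]
  refine congrArg₂ _ (congrArg₂ _ (sum_congr rfl fun k _ => ?_) (sum_congr rfl fun k hk => ?_)) ?_
  · unfold blockLeft
    push_cast
    ring_nf
  · obtain ⟨d, rfl⟩ : ∃ d, m = d + (k + 2) := ⟨m - (k + 2), by have := mem_range.1 hk; omega⟩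
    rw [show d + (k + 2) - 1 - 1 - k = d by omega]
    unfold blockRight
    push_cast
    ring_nf
  · push_cast
    ring_nf

end Blocks

section BlockForm

variable {R : Type*} [CommRing R] (m p : ℕ) (n : ℤ → R)

lemma sum_right_diff_mul_left_diff_eq_sum_blocks :
    ∑ j ∈ Icc 1 p, ∑ j' ∈ Icc 1 j, ∑ k ∈ Icc 1 (m - 1), ∑ k' ∈ Icc 1 k,
        (n (2 * m * j - k) - n (2 * m * j - k - 1)) *
          (n (2 * m * j' - 2 * m + k - k' + 1) - n (2 * m * j' - 2 * m + k - k')) =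
      ∑ K ∈ range p, ∑ J ∈ range (K + 1), ∑ k ∈ range (m - 1),
        (blockRight m n K (k + 1) - blockRight m n K (k + 2)) *
          (blockLeft m n J (k + 1) - blockLeft m n J 0) := by
  simp only [← mul_sum, sum_Icc_one_telescope]
  simp only [sum_Icc_one_eq_sum_range, blockRight, blockLeft]
  refine sum_congr rfl fun K _ => sum_congr rfl fun J _ => sum_congr rfl fun k _ => ?_
  push_cast
  ring_nf

lemma sum_left_diff_mul_boundary_diff_eq_sum_blocks (h0 : ∀ s : ℤ, s ≤ 0 → n s = 0) :
    ∑ j ∈ Icc 1 p, ∑ j' ∈ Icc 1 j, ∑ k ∈ Icc 1 m, ∑ k' ∈ Icc 1 (m - k + 1),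
        (n (2 * m * j - m - k + 1) - n (2 * m * j - m - k)) *
          (n (2 * m * j' - 2 * m - k' + 1) - n (2 * m * j' - 2 * m - k')) =
      ∑ K ∈ range p, (∑ J ∈ range (K + 1),
          (blockLeft m n K m - blockLeft m n K 0) * blockLeft m n J 0
        - ∑ J ∈ range K, ∑ k ∈ range m,
          (blockLeft m n K (k + 1) - blockLeft m n K k) * blockRight m n J (k + 1)) := by
  simp only [← mul_sum, sum_Icc_one_telescope]
  simp only [sum_Icc_one_eq_sum_range]
  refine sum_congr rfl fun K _ => ?_
  -- `n (2 * m * J - (k + 1))` belongs to block `J - 1`, and vanishes for `J = 0`.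
  have inner_sum (J : ℕ) : ∑ k ∈ range m,
      (n (2 * m * (K + 1 : ℕ) - m - (k + 1 : ℕ) + 1) - n (2 * m * (K + 1 : ℕ) - m - (k + 1 : ℕ))) *
        (n (2 * m * (J + 1 : ℕ) - 2 * m)
          - n (2 * m * (J + 1 : ℕ) - 2 * m - (m - (k + 1) + 1 : ℕ))) =
      (blockLeft m n K m - blockLeft m n K 0) * blockLeft m n J 0
        - ∑ k ∈ range m, (blockLeft m n K (k + 1) - blockLeft m n K k) *
            n (2 * m * J - (k + 1)) := by
    rw [← sum_range_sub (blockLeft m n K), sum_mul, ← sum_sub_distrib, ← sum_range_reflect]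
    refine sum_congr rfl fun k hk => ?_
    obtain ⟨d, rfl⟩ : ∃ d, m = d + (k + 1) := ⟨m - (k + 1), by have := mem_range.1 hk; omega⟩
    rw [show d + (k + 1) - 1 - k = d by omega, show d + (k + 1) - (d + 1) + 1 = k + 1 by omega]
    unfold blockLeft
    push_cast
    ring_nf
  have first_block : ∑ k ∈ range m, (blockLeft m n K (k + 1) - blockLeft m n K k) *
      n (2 * m * (0 : ℕ) - (k + 1)) = 0 :=
    sum_eq_zero fun k _ => by rw [h0 _ (by push_cast; linarith), mul_zero]
  simp only [inner_sum, sum_sub_distrib]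
  rw [sum_range_succ' (fun J : ℕ => ∑ k ∈ range m,
    (blockLeft m n K (k + 1) - blockLeft m n K k) * n (2 * m * J - (k + 1))), first_block, add_zero]
  simp only [blockRight, mul_sum]
  push_cast
  rfl

lemma sum_mirror_diff_mul_left_eq_sum_blocks :
    ∑ s ∈ Icc 1 (m - 1), ∑ j ∈ Icc 1 p,
        ((∑ j' ∈ Icc 1 (j - 1), (n (2 * m * j' - s) - n (2 * m * j' - 2 * m + s)))
          + ∑ j' ∈ Icc j p, (n (2 * m * j' - s) - n (2 * m * j' - 2 * m + s - 1))) *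
          n (2 * m * j - 2 * m + s - 1) =
      ∑ K ∈ range p, (∑ J ∈ range K, ∑ k ∈ range (m - 1),
          (blockRight m n J (k + 1) - blockLeft m n J (k + 1)) * blockLeft m n K k
        + ∑ J ∈ range (K + 1), ∑ k ∈ range (m - 1),
          (blockRight m n K (k + 1) - blockLeft m n K k) * blockLeft m n J k) := by
  simp only [add_mul, sum_mul, sum_add_distrib, sum_Icc_sum_Icc_comm]
  simp only [sum_Icc_one_eq_sum_range, Nat.add_sub_cancel]
  congr 1
  all_goals
    rw [sum_comm]
    refine sum_congr rfl fun K _ => ?_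
    rw [sum_comm]
    refine sum_congr rfl fun J _ => sum_congr rfl fun k _ => ?_
    unfold blockRight blockLeft
    push_cast
    ring_nf

lemma sum_middle_diff_mul_left_eq_sum_blocks (hm : 0 < m) :
    ∑ j ∈ Icc 1 p, (∑ j' ∈ Icc j p, (n (2 * m * j' - m) - n (2 * m * j' - m - 1))) *
        n (2 * m * j - m - 1) =
      ∑ K ∈ range p, ∑ J ∈ range (K + 1),
        (blockLeft m n K m - blockLeft m n K (m - 1)) * blockLeft m n J (m - 1) := by
  simp only [sum_mul, sum_Icc_sum_Icc_comm]
  simp only [sum_Icc_one_eq_sum_range]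
  refine sum_congr rfl fun K _ => sum_congr rfl fun J _ => ?_
  unfold blockLeft
  push_cast [hm]
  ring_nf

lemma sum_end_diff_mul_right_eq_sum_blocks (h0 : n 0 = 0) :
    ∑ j ∈ Icc 1 (p - 1),
        ((∑ j' ∈ Icc (j + 1) p, (n (2 * m * j' - 1) - n (2 * m * j' - 2 * m)))
          + n (2 * m * j)) * n (2 * m * j - 1) =
      ∑ K ∈ range p, (∑ J ∈ range K,
          (blockRight m n K 1 - blockLeft m n K 0) * blockRight m n J 1
        + n (2 * m * K) * n (2 * m * K - 1)) := by
  have boundary_terms : ∑ j ∈ Icc 1 (p - 1), n (2 * m * j) * n (2 * m * j - 1) =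
      ∑ K ∈ range p, n (2 * m * K) * n (2 * m * K - 1) := by
    rw [← sum_Ioo_zero_eq_sum_range (by simp [h0])]
    refine sum_congr ?_ fun _ _ => rfl
    ext j
    simp only [mem_Icc, mem_Ioo]
    omega
  simp only [add_mul, sum_mul, sum_add_distrib, boundary_terms, sum_Icc_pred_sum_Icc_succ_comm]
  simp only [sum_Icc_one_eq_sum_range, Nat.add_sub_cancel]
  refine congrArg (· + _) (sum_congr rfl fun K _ => sum_congr rfl fun J _ => ?_)
  unfold blockRight blockLeft
  push_cast
  ring_nf

lemma sum_mirror_diff_mul_right_eq_sum_blocks :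
    ∑ s ∈ Icc 1 (m - 1), ∑ j ∈ Icc 1 p,
        ((∑ j' ∈ Icc 1 j, (n (2 * m * j' - m + s) - n (2 * m * j' - m - s)))
          + ∑ j' ∈ Icc (j + 1) p, (n (2 * m * j' - m + s - 1) - n (2 * m * j' - m - s))) *
          n (2 * m * j - m + s - 1) =
      ∑ K ∈ range p, (∑ J ∈ range (K + 1), ∑ k ∈ range (m - 1),
          (blockRight m n J (k + 1) - blockLeft m n J (k + 1)) * blockRight m n K (k + 2)
        + ∑ J ∈ range K, ∑ k ∈ range (m - 1),
          (blockRight m n K (k + 2) - blockLeft m n K (k + 1)) * blockRight m n J (k + 2)) := by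
  simp only [add_mul, sum_mul, sum_add_distrib, sum_Icc_sum_Icc_succ_comm]
  simp only [sum_Icc_one_eq_sum_range, Nat.add_sub_cancel]
  congr 1
  all_goals
    rw [sum_comm]
    refine sum_congr rfl fun K _ => ?_
    rw [sum_comm]
    refine sum_congr rfl fun J _ => ?_
    rw [← sum_range_reflect]
    refine sum_congr rfl fun k hk => ?_
    obtain ⟨d, rfl⟩ : ∃ d, m = d + (k + 2) := ⟨m - (k + 2), by have := mem_range.1 hk; omega⟩
    rw [show d + (k + 2) - 1 - 1 - k = d by omega]
    unfold blockRight blockLeft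
    push_cast
    ring_nf

end BlockForm

section LocalIdentities

variable {R : Type*} [CommRing R]

lemma two_mul_sum_sq_sub_sum_mul_succ (M : ℕ) (x : ℕ → R) :
    2 * (∑ k ∈ range (M + 1), x (k + 1) ^ 2 - ∑ k ∈ range (M + 2), x k * x (k + 1)) =
      x 1 * (x 1 + 1) - 2 * (x 1 * x 0) + x (M + 1) * (x (M + 1) - 1)
        - 2 * (x (M + 2) * x (M + 1))
        + ∑ s ∈ range M, (x (s + 2) - x (s + 1)) * (x (s + 2) - x (s + 1) + 1) := by
  induction M with
  | zero =>
    simp only [sum_range_succ, sum_range_zero]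
    ring
  | succ M ih =>
    rw [sum_range_succ _ M, sum_range_succ _ (M + 1), sum_range_succ _ (M + 2)]
    linear_combination ih

-- `x` and `y` are the entries of the earlier block read from its left and right end, `z` and `w`
-- those of the later block.
lemma block_pair_identity {m : ℕ} (hm : 0 < m) (x y z w : ℕ → R) (hzw : w m = z m) :
    ∑ k ∈ range (m - 1), (w (k + 1) - w (k + 2)) * (x (k + 1) - x 0)
        - (z m - z 0) * x 0
        + ∑ k ∈ range m, (z (k + 1) - z k) * y (k + 1)
        + ∑ k ∈ range (m - 1), (y (k + 1) - x (k + 1)) * z k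
        + ∑ k ∈ range (m - 1), (w (k + 1) - z k) * x k
        + (z m - z (m - 1)) * x (m - 1)
        - (w 1 - z 0) * y 1
        - ∑ k ∈ range (m - 1), (y (k + 1) - x (k + 1)) * w (k + 2)
        - ∑ k ∈ range (m - 1), (w (k + 2) - z (k + 1)) * y (k + 2) =
      ∑ k ∈ range (m - 1),
        (y (k + 1) - x (k + 1)) * (z k + z (k + 1) - w (k + 1) - w (k + 2)) := by
  obtain ⟨M, rfl⟩ : ∃ M, m = M + 1 := ⟨m - 1, by omega⟩
  rw [Nat.add_sub_cancel, sum_range_succ _ M, ← hzw]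
  clear hzw hm
  induction M with
  | zero => simp
  | succ M ih =>
    simp only [sum_range_succ]
    linear_combination ih

lemma single_block_identity {m : ℕ} (hm : 0 < m) (x y : ℕ → R) (hxy : y m = x m) :
    ∑ k ∈ range (m - 1), (y (k + 1) - y (k + 2)) * (x (k + 1) - x 0)
        - (x m - x 0) * x 0
        + ∑ k ∈ range (m - 1), (y (k + 1) - x k) * x k
        + (x m - x (m - 1)) * x (m - 1)
        - ∑ k ∈ range (m - 1), (y (k + 1) - x (k + 1)) * y (k + 2)
        + ∑ k ∈ range (m - 1), x (k + 1) ^ 2 =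
      ∑ k ∈ range (m - 1), x (k + 1) * (y (k + 1) + y (k + 2))
        - ∑ k ∈ range (m - 1), y (k + 1) * y (k + 2) := by
  obtain ⟨M, rfl⟩ : ∃ M, m = M + 1 := ⟨m - 1, by omega⟩
  rw [Nat.add_sub_cancel, ← hxy]
  clear hxy hm
  induction M with
  | zero => simp
  | succ M ih =>
    simp only [sum_range_succ]
    linear_combination ih

end LocalIdentities

section Field

variable {F : Type*} [Field F] [NeZero (2 : F)]

lemma sum_half_terms_eq_sum_blocks {m : ℕ} (hm : 2 ≤ m) (p : ℕ) (n : ℤ → F) :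
    ∑ j ∈ Icc 1 p,
        (n (2 * m * j - 2 * m + 1) * (n (2 * m * j - 2 * m + 1) + 1) / 2
          - n (2 * m * j - 2 * m + 1) * n (2 * m * j - 2 * m)
          + n (2 * m * j - m - 1) * (n (2 * m * j - m - 1) - 1) / 2
          - n (2 * m * j - m) * n (2 * m * j - m - 1)
          + (1 / 2) * ∑ s ∈ Icc 2 (m - 1),
              (n (2 * m * j - 2 * m + s) - n (2 * m * j - 2 * m + s - 1)) *
                (n (2 * m * j - 2 * m + s) - n (2 * m * j - 2 * m + s - 1) + 1)) =
      ∑ K ∈ range p, (∑ k ∈ range (m - 1), blockLeft m n K (k + 1) ^ 2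
        - ∑ k ∈ range m, blockLeft m n K k * blockLeft m n K (k + 1)) := by
  obtain ⟨M, rfl⟩ : ∃ M, m = M + 2 := ⟨m - 2, by omega⟩
  rw [sum_Icc_one_eq_sum_range]
  refine sum_congr rfl fun K _ => mul_left_cancel₀ (two_ne_zero (α := F)) ?_
  rw [show M + 2 - 1 = M + 1 by omega, two_mul_sum_sq_sub_sum_mul_succ,
    ← Finset.Ico_add_one_right_eq_Icc, sum_Ico_eq_sum_range,
    show M + 1 + 1 - 2 = M by omega]
  unfold blockLeft
  push_cast
  field_simp
  ring_nf

theorem quadratic_identity_neg_neg_general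
    (m p : ℕ) (hm : 2 ≤ m) (n : ℤ → F) (h0 : ∀ s : ℤ, s ≤ 0 → n s = 0) :
    (∑ j ∈ Icc 1 p, ∑ j' ∈ Icc 1 j, ∑ k ∈ Icc 1 (m - 1), ∑ k' ∈ Icc 1 k,
        (n (2 * m * j - k) - n (2 * m * j - k - 1)) *
          (n (2 * m * j' - 2 * m + k - k' + 1) - n (2 * m * j' - 2 * m + k - k'))
      - ∑ j ∈ Icc 1 p, ∑ j' ∈ Icc 1 j, ∑ k ∈ Icc 1 m, ∑ k' ∈ Icc 1 (m - k + 1),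
          (n (2 * m * j - m - k + 1) - n (2 * m * j - m - k)) *
            (n (2 * m * j' - 2 * m - k' + 1) - n (2 * m * j' - 2 * m - k'))
      + ∑ s ∈ Icc 1 (m - 1), ∑ j ∈ Icc 1 p,
          ((∑ j' ∈ Icc 1 (j - 1), (n (2 * m * j' - s) - n (2 * m * j' - 2 * m + s)))
            + ∑ j' ∈ Icc j p, (n (2 * m * j' - s) - n (2 * m * j' - 2 * m + s - 1))) *
            n (2 * m * j - 2 * m + s - 1)
      + ∑ j ∈ Icc 1 p,
          (∑ j' ∈ Icc j p, (n (2 * m * j' - m) - n (2 * m * j' - m - 1))) *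
            n (2 * m * j - m - 1)
      - ∑ j ∈ Icc 1 (p - 1),
          ((∑ j' ∈ Icc (j + 1) p, (n (2 * m * j' - 1) - n (2 * m * j' - 2 * m)))
            + n (2 * m * j)) * n (2 * m * j - 1)
      - ∑ s ∈ Icc 1 (m - 1), ∑ j ∈ Icc 1 p,
          ((∑ j' ∈ Icc 1 j, (n (2 * m * j' - m + s) - n (2 * m * j' - m - s)))
            + ∑ j' ∈ Icc (j + 1) p, (n (2 * m * j' - m + s - 1) - n (2 * m * j' - m - s))) *
            n (2 * m * j - m + s - 1))
    + ∑ j ∈ Icc 1 p,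
        (n (2 * m * j - 2 * m + 1) * (n (2 * m * j - 2 * m + 1) + 1) / 2
          - n (2 * m * j - 2 * m + 1) * n (2 * m * j - 2 * m)
          + n (2 * m * j - m - 1) * (n (2 * m * j - m - 1) - 1) / 2
          - n (2 * m * j - m) * n (2 * m * j - m - 1)
          + (1 / 2) * ∑ s ∈ Icc 2 (m - 1),
              (n (2 * m * j - 2 * m + s) - n (2 * m * j - 2 * m + s - 1)) *
                (n (2 * m * j - 2 * m + s) - n (2 * m * j - 2 * m + s - 1) + 1))
    = ∑ i ∈ (Icc 1 (2 * m * p - 1)).filter (fun i => ¬ m ∣ i),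
          ∑ j ∈ Icc (i + 1) (2 * m * p - 1), (epsLO m i j : F) * n i * n j
        - ∑ i ∈ Icc 1 (2 * m * p - 2), n i * n (i + 1) := by
  have m_pos : 0 < m := by omega
  rw [sum_right_diff_mul_left_diff_eq_sum_blocks,
    sum_left_diff_mul_boundary_diff_eq_sum_blocks m p n h0,
    sum_mirror_diff_mul_left_eq_sum_blocks, sum_middle_diff_mul_left_eq_sum_blocks m p n m_pos,
    sum_end_diff_mul_right_eq_sum_blocks m p n (h0 0 le_rfl),
    sum_mirror_diff_mul_right_eq_sum_blocks, sum_half_terms_eq_sum_blocks hm,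
    sum_epsLO_eq_sum_blocks m_pos, sum_mul_succ_eq_sum_blocks m_pos p (h0 0 le_rfl)]
  simp only [← sum_sub_distrib, ← sum_add_distrib]
  refine sum_congr rfl fun K _ => ?_
  have pairs := sum_congr rfl fun J (_ : J ∈ range K) => block_pair_identity m_pos
    (blockLeft m n J) (blockRight m n J) (blockLeft m n K) (blockRight m n K)
    (blockRight_self m n K)
  have single := single_block_identity m_pos (blockLeft m n K) (blockRight m n K)
    (blockRight_self m n K)
  simp only [sum_sub_distrib, sum_add_distrib, sum_range_succ _ K] at pairs single ⊢
  linear_combination pairs + single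

end Field

/-- The key quadratic identity (3.16) = (3.17) in the proof of Theorem 1.1. -/
theorem quadratic_identity_neg_neg
    (m p : ℕ) (hm : 2 ≤ m) (hp : 0 < p) (n : ℤ → ℤ)
    (h0 : ∀ s : ℤ, s ≤ 0 → n s = 0) :
    ((∑ j ∈ Icc 1 p, ∑ j' ∈ Icc 1 j, ∑ k ∈ Icc 1 (m - 1), ∑ k' ∈ Icc 1 k,
        (n (2 * m * j - k) - n (2 * m * j - k - 1)) *
          (n (2 * m * j' - 2 * m + k - k' + 1) - n (2 * m * j' - 2 * m + k - k'))
      - ∑ j ∈ Icc 1 p, ∑ j' ∈ Icc 1 j, ∑ k ∈ Icc 1 m, ∑ k' ∈ Icc 1 (m - k + 1),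
          (n (2 * m * j - m - k + 1) - n (2 * m * j - m - k)) *
            (n (2 * m * j' - 2 * m - k' + 1) - n (2 * m * j' - 2 * m - k'))
      + ∑ s ∈ Icc 1 (m - 1), ∑ j ∈ Icc 1 p,
          ((∑ j' ∈ Icc 1 (j - 1), (n (2 * m * j' - s) - n (2 * m * j' - 2 * m + s)))
            + ∑ j' ∈ Icc j p, (n (2 * m * j' - s) - n (2 * m * j' - 2 * m + s - 1))) *
            n (2 * m * j - 2 * m + s - 1)
      + ∑ j ∈ Icc 1 p,
          (∑ j' ∈ Icc j p, (n (2 * m * j' - m) - n (2 * m * j' - m - 1))) *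
            n (2 * m * j - m - 1)
      - ∑ j ∈ Icc 1 (p - 1),
          ((∑ j' ∈ Icc (j + 1) p, (n (2 * m * j' - 1) - n (2 * m * j' - 2 * m)))
            + n (2 * m * j)) * n (2 * m * j - 1)
      - ∑ s ∈ Icc 1 (m - 1), ∑ j ∈ Icc 1 p,
          ((∑ j' ∈ Icc 1 j, (n (2 * m * j' - m + s) - n (2 * m * j' - m - s)))
            + ∑ j' ∈ Icc (j + 1) p, (n (2 * m * j' - m + s - 1) - n (2 * m * j' - m - s))) *
            n (2 * m * j - m + s - 1) : ℤ) : ℚ)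
    + ∑ j ∈ Icc 1 p,
        ((n (2 * m * j - 2 * m + 1) : ℚ) * ((n (2 * m * j - 2 * m + 1) : ℚ) + 1) / 2
          - (n (2 * m * j - 2 * m + 1) : ℚ) * (n (2 * m * j - 2 * m) : ℚ)
          + (n (2 * m * j - m - 1) : ℚ) * ((n (2 * m * j - m - 1) : ℚ) - 1) / 2
          - (n (2 * m * j - m) : ℚ) * (n (2 * m * j - m - 1) : ℚ)
          + (1 / 2 : ℚ) * ∑ s ∈ Icc 2 (m - 1),
              ((n (2 * m * j - 2 * m + s) : ℚ) - (n (2 * m * j - 2 * m + s - 1) : ℚ)) *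
                ((n (2 * m * j - 2 * m + s) : ℚ) - (n (2 * m * j - 2 * m + s - 1) : ℚ) + 1))
    = ((∑ i ∈ (Icc 1 (2 * m * p - 1)).filter (fun i => ¬ m ∣ i),
          ∑ j ∈ Icc (i + 1) (2 * m * p - 1), epsLO m i j * n i * n j
        - ∑ i ∈ Icc 1 (2 * m * p - 2), n i * n (i + 1) : ℤ) : ℚ) := by
  have h := quadratic_identity_neg_neg_general m p hm (fun s => (n s : ℚ)) fun s hs => by
    simp [h0 s hs]
  exact_mod_cast h

end
end

section
/- Let m ≥ 2 and p ≥ 1 be integers and let n_1, …, n_{2mp} be integers, with the convention n_s = 0 for every index s ≤ 0. Then the following expression E': E' = Σ_{k=1}^{m} Σ_{j=1}^{p} Σ_{j'=1}^{j} (n_{2mj−k+1} − n_{2mj−k})(n_{2mj'−2m+k} − n_{2mj'−2m}) − Σ_{s=1}^{m−1} Σ_{j=2}^{p} Σ_{j'=2}^{j} (n_{2mj−m−s+1} − n_{2mj−m−s})(n_{2mj'−2m} − n_{2mj'−3m+s}) + Σ_{j=1}^{p} Σ_{j'=j}^{p} (n_{2mj'} − n_{2mj'−2m+1}) n_{2mj−2m}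 + Σ_{j=1}^{p} n_{2mj−2m+1} n_{2mj−2m} + Σ_{s=1}^{m−1} Σ_{j=1}^{p} ( Σ_{j'=1}^{j} (n_{2mj'−s} − n_{2mj'−2m+s}) + Σ_{j'=j+1}^{p} (n_{2mj'−s} − n_{2mj'−2m+s+1}) ) n_{2mj−2m+s} − Σ_{j=1}^{p} ( Σ_{j'=j}^{p} (n_{2mj'−m+1} − n_{2mj'−m}) ) n_{2mj−m} − Σ_{s=1}^{m−1} Σ_{j=1}^{p} ( Σ_{j'=1}^{j−1} (n_{2mj'−m+s} − n_{2mj'−m−s}) + Σ_{j'=j}^{p} (n_{2mj'−m+s+1} − n_{2mj'−m−s}) ) n_{2mj−m+s} + Σ_{j=1}^{p} [ n_{2mj−2m+1}(n_{2mj−2m+1}+1)/2 − n_{2mj−2m+1} n_{2mj−2m} + n_{2mj−m−1}(n_{2mj−m−1}−1)/2 − n_{2mj−m} n_{2mj−m−1} + (1/2) Σ_{s=2}^{m−1} (n_{2mj−2m+s} − n_{2mj−2m+s−1})(n_{2mj−2m+s} − n_{2mj−2m+s−1} + 1) ] satisfies E' = Σ_{1 ≤ i < j ≤ 2mp, m ∤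 i} Δ_{i,j,m} n_i n_j. -/
open Finset

noncomputable section

/-!
The coefficient `Δ_{i,j,m}` is `2m`-periodic in `i` and in `j`, so cut the `2mp` indices into `p`
blocks of length `2m`. If the block of the larger index is made the outermost summation, both sides
become sums over the blocks of one expression in the entries `x` of the block and the sums `Y` of
the entries, offset by offset, of all earlier blocks. The convention `n_0 = 0` enters here: offset
`0` is offset `2m` of the previous block, so summing `n` at offset `0` over the first `j` blocks
gives `Y (2m)`.

The quadratic terms with a factor `1/2` telescope to `∑ x_s (x_s - x_{s+1})`, and the coefficients
of `Y (2m)` telescope to `0`. After the reflection `s ↦ m - s` of some of the sums, what is left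
agrees summand by summand, one summand for each pair of offsets `s` and `2m - s`.
-/

section IntervalSums

variable {M : Type*} [AddCommMonoid M]

lemma sum_Icc_one_add (g : ℕ → M) (a b : ℕ) :
    ∑ i ∈ Icc 1 (a + b), g i = ∑ i ∈ Icc 1 a, g i + ∑ i ∈ Icc 1 b, g (a + i) := by
  induction b with
  | zero => simp
  | succ b ih =>
    rw [← add_assoc, sum_Icc_succ_top (by omega), ih, sum_Icc_succ_top (by omega), add_assoc,
      add_assoc]

lemma sum_Icc_one_mul (g : ℕ → M) (N p : ℕ) :
    ∑ i ∈ Icc 1 (N * p), g i = ∑ j ∈ Icc 1 p, ∑ a ∈ Icc 1 N, g (N * (j - 1) + a) := by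
  induction p with
  | zero => simp
  | succ p ih =>
    rw [mul_add_one, sum_Icc_one_add, ih, sum_Icc_succ_top (by omega), Nat.add_sub_cancel]

lemma sum_Icc_two (g : ℕ → M) (p : ℕ) :
    ∑ j ∈ Icc 2 p, g j = ∑ j ∈ Icc 1 (p - 1), g (j + 1) := by
  rcases p with _ | p
  · simp
  · rw [← map_add_right_Icc 1 p 1, sum_map, Nat.add_sub_cancel]
    rfl

lemma sum_Icc_one_reflect (g : ℤ → M) (m : ℕ) :
    ∑ s ∈ Icc 1 (m - 1), g (m - s) = ∑ s ∈ Icc 1 (m - 1), g s := by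
  refine sum_nbij' (m - ·) (m - ·) ?_ ?_ ?_ ?_ fun s hs => congrArg g ?_ <;>
    simp only [mem_Icc] at * <;> omega

lemma sum_Icc_one_two_mul (g : ℕ → M) {m : ℕ} (hm : 0 < m) (h₁ : g m = 0) (h₂ : g (2 * m) = 0) :
    ∑ a ∈ Icc 1 (2 * m), g a = ∑ s ∈ Icc 1 (m - 1), (g s + g (2 * m - s)) := by
  obtain ⟨k, rfl⟩ : ∃ k, m = k + 1 := ⟨m - 1, by omega⟩
  have h_upper : ∑ b ∈ Icc 1 k, g (k + 1 + b) = ∑ s ∈ Icc 1 k, g (2 * (k + 1) - s) := by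
    refine sum_nbij' (k + 1 - ·) (k + 1 - ·) ?_ ?_ ?_ ?_ fun s hs => congrArg g ?_ <;>
      simp only [mem_Icc] at * <;> omega
  rw [two_mul] at h₂
  rw [two_mul, sum_Icc_one_add, sum_Icc_succ_top (by omega), sum_Icc_succ_top (by omega), h₁, h₂,
    add_zero, add_zero, h_upper, sum_add_distrib, Nat.add_sub_cancel, two_mul]

lemma sum_Icc_one_sub {G : Type*} [AddCommGroup G] (g : ℤ → G) (n : ℕ) :
    ∑ s ∈ Icc 1 n, (g (s + 1) - g s) = g (n + 1) - g 1 := by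
  induction n with
  | zero => simp
  | succ n ih =>
    rw [sum_Icc_succ_top (by omega), ih]
    push_cast
    abel

end IntervalSums

section TriangularSums

variable {R : Type*} [NonUnitalNonAssocSemiring R] (g h : ℕ → R) (p : ℕ)

lemma sum_sum_Icc_right_mul :
    ∑ j ∈ Icc 1 p, (∑ j' ∈ Icc j p, g j') * h j = ∑ j ∈ Icc 1 p, g j * ∑ j' ∈ Icc 1 j, h j' := by
  simp only [mul_sum, sum_mul]
  exact sum_comm' fun j j' => by simp only [mem_Icc]; omega

lemma sum_sum_Icc_succ_right_mul :
    ∑ j ∈ Icc 1 p, (∑ j' ∈ Icc (j + 1) p, g j') * h j =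
      ∑ j ∈ Icc 1 p, g j * ∑ j' ∈ Icc 1 (j - 1), h j' := by
  simp only [mul_sum, sum_mul]
  exact sum_comm' fun j j' => by simp only [mem_Icc]; omega

lemma sum_sum_Icc_two_mul :
    ∑ j ∈ Icc 2 p, ∑ j' ∈ Icc 2 j, g j * h j' =
      ∑ j ∈ Icc 1 p, g j * ∑ j' ∈ Icc 1 (j - 1), h (j' + 1) := by
  simp only [← mul_sum, ← sum_Icc_two h]
  refine sum_subset (Icc_subset_Icc_left one_le_two) fun j hj hj' => ?_
  obtain rfl : j = 1 := by simp only [mem_Icc] at hj hj'; omega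
  simp

end TriangularSums

section Blocks

/-- The entry at offset `a` in the `j`-th block of length `2 * m`, blocks being numbered from `1`.
Offset `0` is the last entry of the previous block. -/
def block {M : Type*} (f : ℤ → M) (m j : ℕ) (a : ℤ) : M := f (2 * m * j - 2 * m + a)

lemma apply_natCast_eq_block {M : Type*} (f : ℤ → M) (m : ℕ) {j : ℕ} (hj : 1 ≤ j) (a : ℕ) :
    f (2 * m * (j - 1) + a : ℕ) = block f m j a :=
  congrArg f (by push_cast [hj]; ring)

lemma block_succ_zero {M : Type*} (f : ℤ → M) (m j : ℕ) :
    block f m (j + 1) 0 = block f m j (2 * m) :=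
  congrArg f (by push_cast; ring)

variable {M : Type*} [AddCommMonoid M] (f : ℤ → M) (m : ℕ)

/-- The sum of the entries at offset `a` over the blocks preceding the `j`-th one. -/
def blockPrefixSum (j : ℕ) (a : ℤ) : M := ∑ i ∈ Icc 1 (j - 1), block f m i a

lemma sum_Icc_block {j : ℕ} (hj : 1 ≤ j) (a : ℤ) :
    ∑ i ∈ Icc 1 j, block f m i a = blockPrefixSum f m j a + block f m j a := by
  obtain ⟨j, rfl⟩ := Nat.exists_eq_add_of_le' hj
  exact sum_Icc_succ_top (by omega) _

variable {f} in
lemma sum_Icc_block_zero (h0 : f 0 = 0) (j : ℕ) :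
    ∑ i ∈ Icc 1 j, block f m i 0 = blockPrefixSum f m j (2 * m) := by
  rcases j with _ | j
  · simp [blockPrefixSum]
  · have h_first : block f m 1 0 = 0 := by simp [block, h0]
    rw [add_comm, sum_Icc_one_add, Icc_self, sum_singleton, h_first, zero_add, blockPrefixSum,
      Nat.add_sub_cancel_left]
    exact sum_congr rfl fun i _ => add_comm i 1 ▸ block_succ_zero f m i

end Blocks

section Delta

lemma dvd_iff_eq_of_lt_two_mul {d k : ℕ} (h0 : 0 < k) (h : k < 2 * d) : d ∣ k ↔ k = d :=
  ⟨fun hd => Nat.eq_of_dvd_of_lt_two_mul h0.ne' hd h, fun hk => hk ▸ dvd_rfl⟩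

lemma dvd_iff_eq_zero_of_abs_lt {d k : ℤ} (h : |k| < d) : d ∣ k ↔ k = 0 :=
  ⟨fun hd => Int.eq_zero_of_abs_lt_dvd hd h, fun hk => hk ▸ dvd_zero d⟩

lemma deltaLO_of_dvd {m i : ℕ} (h : m ∣ i) (j : ℕ) : deltaLO m i j = 0 := if_pos h

lemma deltaLO_add_mul_right (m q : ℕ) {i : ℕ} (hi : 0 < i) (j : ℕ) :
    deltaLO m i (2 * m * q + j) = deltaLO m i j := by
  have h_add : i + (2 * m * q + j) = 2 * m * q + (i + j) := by ring
  have h_add_pred : 2 * m * q + (i + j) - 1 = 2 * m * q + (i + j - 1) := by omega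
  have h_sub : ((2 * m * q + j : ℕ) : ℤ) - i = j - i + 2 * m * q := by push_cast; ring
  have h_sub_pred : (j : ℤ) - i + 2 * m * q - 1 = j - i - 1 + 2 * m * q := by ring
  have hd : (2 * m : ℤ) ∣ 2 * m * q := dvd_mul_right _ _
  simp only [deltaLO, h_add, h_add_pred, h_sub, h_sub_pred, dvd_add_left hd,
    Nat.dvd_add_right (dvd_mul_right (2 * m) q)]

lemma deltaLO_add_mul_left (m q : ℕ) {i : ℕ} (hi : 0 < i) (j : ℕ) :
    deltaLO m (2 * m * q + i) j = deltaLO m i j := by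
  have h_add : 2 * m * q + i + j = 2 * m * q + (i + j) := by ring
  have h_add_pred : 2 * m * q + (i + j) - 1 = 2 * m * q + (i + j - 1) := by omega
  have h_sub : (j : ℤ) - (2 * m * q + i : ℕ) = j - i - 2 * m * q := by push_cast; ring
  have h_sub_pred : (j : ℤ) - i - 2 * m * q - 1 = j - i - 1 - 2 * m * q := by ring
  have hd : (2 * m : ℤ) ∣ 2 * m * q := dvd_mul_right _ _
  have hd' : m ∣ 2 * m * q := ⟨2 * q, by ring⟩
  simp only [deltaLO, h_add, h_add_pred, h_sub, h_sub_pred, dvd_sub_left hd,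
    Nat.dvd_add_right (dvd_mul_right (2 * m) q), Nat.dvd_add_right hd']

lemma deltaLO_eq_ite {m a b : ℕ} (ha : 0 < a) (ham : a ≠ m) (ha' : a < 2 * m)
    (hb : b ∈ Icc 1 (2 * m)) :
    deltaLO m a b = (if b = 2 * m - a then 1 else 0) + (if b = 2 * m - a + 1 then 1 else 0)
      - (if b = a then 1 else 0) - (if b = a + 1 then 1 else 0) := by
  rw [mem_Icc] at hb
  have h_neg : 2 * m ∣ a + b ↔ a + b = 2 * m := dvd_iff_eq_of_lt_two_mul (by omega) (by omega)
  have h_neg_succ : 2 * m ∣ a + b - 1 ↔ a + b - 1 = 2 * m :=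
    dvd_iff_eq_of_lt_two_mul (by omega) (by omega)
  have h_self : (2 * m : ℤ) ∣ b - a ↔ (b - a : ℤ) = 0 :=
    dvd_iff_eq_zero_of_abs_lt (by rw [abs_lt]; omega)
  have h_succ : (2 * m : ℤ) ∣ b - a - 1 ↔ (b - a - 1 : ℤ) = 0 :=
    dvd_iff_eq_zero_of_abs_lt (by rw [abs_lt]; omega)
  simp only [deltaLO, dvd_iff_eq_of_lt_two_mul ha ha', if_neg ham, h_neg, h_neg_succ, h_self,
    h_succ]
  split_ifs <;> omega

variable {R : Type*} [Ring R]

lemma sum_deltaLO_mul {m a : ℕ} (ha : 0 < a) (ham : a ≠ m) (ha' : a < 2 * m) {S : Finset ℕ}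
    (hS : S ⊆ Icc 1 (2 * m)) (x : ℕ → R) :
    ∑ b ∈ S, (deltaLO m a b : R) * x b =
      (if 2 * m - a ∈ S then x (2 * m - a) else 0)
        + (if 2 * m - a + 1 ∈ S then x (2 * m - a + 1) else 0)
        - (if a ∈ S then x a else 0) - (if a + 1 ∈ S then x (a + 1) else 0) := by
  have h_row : ∀ b ∈ S, (deltaLO m a b : R) * x b =
      (if b = 2 * m - a then x b else 0) + (if b = 2 * m - a + 1 then x b else 0)
        - (if b = a then x b else 0) - (if b = a + 1 then x b else 0) := fun b hb => by
    rw [deltaLO_eq_ite ha ham ha' (hS hb)]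
    push_cast
    simp only [sub_mul, add_mul, ite_mul, one_mul, zero_mul]
  rw [sum_congr rfl h_row]
  simp only [sum_sub_distrib, sum_add_distrib, sum_ite_eq']

lemma sum_Icc_one_deltaLO_mul {m a : ℕ} (ha : 0 < a) (ham : a ≠ m) (ha' : a < 2 * m) (x : ℕ → R) :
    ∑ b ∈ Icc 1 (2 * m), (deltaLO m a b : R) * x b =
      x (2 * m - a) + x (2 * m - a + 1) - x a - x (a + 1) := by
  rw [sum_deltaLO_mul ha ham ha' subset_rfl, if_pos, if_pos, if_pos, if_pos] <;>
    rw [mem_Icc] <;> omega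

lemma sum_Icc_succ_deltaLO_mul_of_lt {m a : ℕ} (ha : 0 < a) (ham : a < m) (x : ℕ → R) :
    ∑ b ∈ Icc (a + 1) (2 * m), (deltaLO m a b : R) * x b =
      x (2 * m - a) + x (2 * m - a + 1) - x (a + 1) := by
  rw [sum_deltaLO_mul ha ham.ne (by omega) (Icc_subset_Icc_left (by omega)), if_pos, if_pos,
    if_neg, if_pos, sub_zero] <;> rw [mem_Icc] <;> omega

lemma sum_Icc_succ_deltaLO_mul_of_gt {m a : ℕ} (ham : m < a) (ha' : a < 2 * m) (x : ℕ → R) :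
    ∑ b ∈ Icc (a + 1) (2 * m), (deltaLO m a b : R) * x b = -x (a + 1) := by
  rw [sum_deltaLO_mul (by omega) ham.ne' ha' (Icc_subset_Icc_left (by omega)), if_neg, if_neg,
    if_neg, if_pos, add_zero, sub_zero, zero_sub] <;> rw [mem_Icc] <;> omega

end Delta

section BlockForm

variable {R : Type*} [CommRing R]

/-- The contribution to `∑ Δ_{i,j,m} n_i n_j` of the pairs whose larger index lies in a given
block: `x` lists the entries of that block by offset, `Y` the sums of the entries of all preceding
blocks, and the offsets `s` and `2 * m - s` are taken together. -/
def blockForm (m : ℕ) (x Y : ℤ → R) : R :=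
  ∑ s ∈ Icc 1 (m - 1),
    ((Y s - Y (2 * m - s)) * (x (2 * m - s) + x (2 * m - s + 1) - x s - x (s + 1))
      + x s * (x (2 * m - s) + x (2 * m - s + 1) - x (s + 1)) - x (2 * m - s) * x (2 * m - s + 1))

lemma sum_deltaLO_mul_mul_eq_blockForm {m : ℕ} (hm : 0 < m) (x Y : ℤ → R) :
    ∑ b ∈ Icc 1 (2 * m), (∑ a ∈ Icc 1 (2 * m), (deltaLO m a b : R) * Y a
      + ∑ a ∈ Icc 1 (b - 1), (deltaLO m a b : R) * x a) * x b = blockForm m x Y := by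
  have h_rows : ∑ b ∈ Icc 1 (2 * m), (∑ a ∈ Icc 1 (2 * m), (deltaLO m a b : R) * Y a
      + ∑ a ∈ Icc 1 (b - 1), (deltaLO m a b : R) * x a) * x b =
      ∑ a ∈ Icc 1 (2 * m), (Y a * ∑ b ∈ Icc 1 (2 * m), (deltaLO m a b : R) * x b
        + x a * ∑ b ∈ Icc (a + 1) (2 * m), (deltaLO m a b : R) * x b) := by
    simp only [add_mul, sum_mul, mul_sum, sum_add_distrib]
    congr 1
    · rw [sum_comm]
      exact sum_congr rfl fun a _ => sum_congr rfl fun b _ => by ring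
    · rw [sum_comm' (t' := Icc 1 (2 * m)) (s' := fun a => Icc (a + 1) (2 * m))
        fun b a => by simp only [mem_Icc]; omega]
      exact sum_congr rfl fun a _ => sum_congr rfl fun b _ => by ring
  rw [h_rows, sum_Icc_one_two_mul _ hm (by simp [deltaLO_of_dvd]) (by simp [deltaLO_of_dvd]),
    blockForm]
  refine sum_congr rfl fun s hs => ?_
  rw [mem_Icc] at hs
  have h_cast : ((2 * m - s : ℕ) : ℤ) = 2 * m - s := by omega
  have h_compl : 2 * m - (2 * m - s) = s := by omega
  rw [sum_Icc_one_deltaLO_mul (by omega) (by omega) (by omega) (x ·),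
    sum_Icc_one_deltaLO_mul (by omega) (by omega) (by omega) (x ·),
    sum_Icc_succ_deltaLO_mul_of_lt (by omega) (by omega) (x ·),
    sum_Icc_succ_deltaLO_mul_of_gt (by omega) (by omega) (x ·), h_compl]
  push_cast [h_cast]
  ring

variable {m : ℕ} (f : ℤ → R)

lemma sum_deltaLO_mul_preceding {j b : ℕ} (hj : 1 ≤ j) (hb : 1 ≤ b) :
    ∑ i ∈ Icc 1 (2 * m * (j - 1) + b - 1), (deltaLO m i (2 * m * (j - 1) + b) : R) * f i =
      ∑ a ∈ Icc 1 (2 * m), (deltaLO m a b : R) * blockPrefixSum f m j a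
        + ∑ a ∈ Icc 1 (b - 1), (deltaLO m a b : R) * block f m j a := by
  have h_term {i a : ℕ} (hi : 1 ≤ i) (ha : 1 ≤ a) :
      (deltaLO m (2 * m * (i - 1) + a) (2 * m * (j - 1) + b) : R) * f (2 * m * (i - 1) + a : ℕ) =
        (deltaLO m a b : R) * block f m i a := by
    rw [deltaLO_add_mul_right m _ (by omega), deltaLO_add_mul_left m _ ha,
      apply_natCast_eq_block f m hi]
  rw [Nat.add_sub_assoc hb, sum_Icc_one_add, sum_Icc_one_mul, sum_comm]
  congr 1
  · refine sum_congr rfl fun a ha => ?_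
    rw [blockPrefixSum, mul_sum]
    exact sum_congr rfl fun i hi => h_term (mem_Icc.1 hi).1 (mem_Icc.1 ha).1
  · exact sum_congr rfl fun a ha => h_term hj (mem_Icc.1 ha).1

theorem sum_deltaLO_eq_sum_blockForm (hm : 0 < m) (p : ℕ) :
    ∑ i ∈ (Icc 1 (2 * m * p)).filter (fun i => ¬ m ∣ i),
        ∑ j ∈ Icc (i + 1) (2 * m * p), (deltaLO m i j : R) * f i * f j =
      ∑ j ∈ Icc 1 p, blockForm m (block f m j) (blockPrefixSum f m j) := by
  have h_filter : ∀ i ∈ Icc 1 (2 * m * p),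
      ∑ j ∈ Icc (i + 1) (2 * m * p), (deltaLO m i j : R) * f i * f j ≠ 0 → ¬ m ∣ i :=
    fun i _ h hi => h (by simp [deltaLO_of_dvd hi])
  have h_swap : ∑ i ∈ Icc 1 (2 * m * p),
        ∑ j ∈ Icc (i + 1) (2 * m * p), (deltaLO m i j : R) * f i * f j =
      ∑ j ∈ Icc 1 (2 * m * p), (∑ i ∈ Icc 1 (j - 1), (deltaLO m i j : R) * f i) * f j := by
    simp only [sum_mul]
    exact sum_comm' fun i j => by simp only [mem_Icc]; omega
  rw [sum_filter_of_ne h_filter, h_swap, sum_Icc_one_mul]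
  refine sum_congr rfl fun j hj => ?_
  rw [← sum_deltaLO_mul_mul_eq_blockForm hm]
  refine sum_congr rfl fun b hb => ?_
  rw [mem_Icc] at hj hb
  rw [sum_deltaLO_mul_preceding f hj.1 hb.1, apply_natCast_eq_block f m hj.1]

end BlockForm

section Terms

variable {R : Type*} [CommRing R] (f : ℤ → R) (m p : ℕ)

lemma sum_upper_diff_mul_lower (h0 : f 0 = 0) :
    ∑ k ∈ Icc 1 m, ∑ j ∈ Icc 1 p, ∑ j' ∈ Icc 1 j,
        (f (2 * m * j - k + 1) - f (2 * m * j - k)) *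
          (f (2 * m * j' - 2 * m + k) - f (2 * m * j' - 2 * m)) =
      ∑ j ∈ Icc 1 p, ∑ k ∈ Icc 1 m,
        (block f m j (2 * m - k + 1) - block f m j (2 * m - k)) *
          (blockPrefixSum f m j k + block f m j k - blockPrefixSum f m j (2 * m)) := by
  rw [sum_comm]
  refine sum_congr rfl fun j hj => sum_congr rfl fun k _ => ?_
  rw [← mul_sum, ← sum_Icc_block f m (mem_Icc.1 hj).1, ← sum_Icc_block_zero m h0,
    ← sum_sub_distrib]
  simp only [block]
  ring_nf

lemma sum_lower_diff_mul_upper :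
    ∑ s ∈ Icc 1 (m - 1), ∑ j ∈ Icc 2 p, ∑ j' ∈ Icc 2 j,
        (f (2 * m * j - m - s + 1) - f (2 * m * j - m - s)) *
          (f (2 * m * j' - 2 * m) - f (2 * m * j' - 3 * m + s)) =
      ∑ j ∈ Icc 1 p, ∑ s ∈ Icc 1 (m - 1),
        (block f m j (s + 1) - block f m j s) *
          (blockPrefixSum f m j (2 * m) - blockPrefixSum f m j (2 * m - s)) := by
  rw [← sum_Icc_one_reflect fun s => ∑ j ∈ Icc 2 p, ∑ j' ∈ Icc 2 j,
        (f (2 * m * j - m - s + 1) - f (2 * m * j - m - s)) *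
          (f (2 * m * j' - 2 * m) - f (2 * m * j' - 3 * m + s)), sum_comm (s := Icc 1 p)]
  refine sum_congr rfl fun s _ => ?_
  rw [sum_sum_Icc_two_mul (fun j => f (2 * m * j - m - (m - s) + 1) - f (2 * m * j - m - (m - s)))
    fun j' => f (2 * m * j' - 2 * m) - f (2 * m * j' - 3 * m + (m - s))]
  simp only [blockPrefixSum, ← sum_sub_distrib, block]
  push_cast
  ring_nf

lemma sum_span_mul_zeroth (h0 : f 0 = 0) :
    ∑ j ∈ Icc 1 p, ∑ j' ∈ Icc j p,
        (f (2 * m * j') - f (2 * m * j' - 2 * m + 1)) * f (2 * m * j - 2 * m) =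
      ∑ j ∈ Icc 1 p, (block f m j (2 * m) - block f m j 1) * blockPrefixSum f m j (2 * m) := by
  simp only [← sum_mul, ← sum_Icc_block_zero m h0, ← sum_sum_Icc_right_mul, block, sub_add_cancel,
    add_zero]

lemma sum_mul_lower :
    ∑ s ∈ Icc 1 (m - 1), ∑ j ∈ Icc 1 p,
        ((∑ j' ∈ Icc 1 j, (f (2 * m * j' - s) - f (2 * m * j' - 2 * m + s)))
          + ∑ j' ∈ Icc (j + 1) p, (f (2 * m * j' - s) - f (2 * m * j' - 2 * m + s + 1))) *
          f (2 * m * j - 2 * m + s) =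
      ∑ j ∈ Icc 1 p, ∑ s ∈ Icc 1 (m - 1),
        ((blockPrefixSum f m j (2 * m - s) + block f m j (2 * m - s)
            - (blockPrefixSum f m j s + block f m j s)) * block f m j s
          + (block f m j (2 * m - s) - block f m j (s + 1)) * blockPrefixSum f m j s) := by
  rw [sum_comm (s := Icc 1 p)]
  refine sum_congr rfl fun s _ => ?_
  simp only [add_mul, sum_add_distrib]
  congr 1
  · refine sum_congr rfl fun j hj => ?_
    rw [← sum_Icc_block f m (mem_Icc.1 hj).1, ← sum_Icc_block f m (mem_Icc.1 hj).1,
      ← sum_sub_distrib]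
    simp only [block]
    ring_nf
  · rw [sum_sum_Icc_succ_right_mul (fun j' => f (2 * m * j' - s) - f (2 * m * j' - 2 * m + s + 1))]
    simp only [blockPrefixSum, block]
    ring_nf

lemma sum_mul_middle :
    ∑ j ∈ Icc 1 p,
        (∑ j' ∈ Icc j p, (f (2 * m * j' - m + 1) - f (2 * m * j' - m))) * f (2 * m * j - m) =
      ∑ j ∈ Icc 1 p,
        (block f m j (m + 1) - block f m j m) * (blockPrefixSum f m j m + block f m j m) := by
  rw [sum_sum_Icc_right_mul (fun j' => f (2 * m * j' - m + 1) - f (2 * m * j' - m))]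
  refine sum_congr rfl fun j hj => ?_
  rw [← sum_Icc_block f m (mem_Icc.1 hj).1]
  simp only [block]
  ring_nf

lemma sum_mul_upper :
    ∑ s ∈ Icc 1 (m - 1), ∑ j ∈ Icc 1 p,
        ((∑ j' ∈ Icc 1 (j - 1), (f (2 * m * j' - m + s) - f (2 * m * j' - m - s)))
          + ∑ j' ∈ Icc j p, (f (2 * m * j' - m + s + 1) - f (2 * m * j' - m - s))) *
          f (2 * m * j - m + s) =
      ∑ j ∈ Icc 1 p, ∑ s ∈ Icc 1 (m - 1),
        ((blockPrefixSum f m j (2 * m - s) - blockPrefixSum f m j s) * block f m j (2 * m - s)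
          + (block f m j (2 * m - s + 1) - block f m j s) *
            (blockPrefixSum f m j (2 * m - s) + block f m j (2 * m - s))) := by
  rw [← sum_Icc_one_reflect fun s => ∑ j ∈ Icc 1 p,
        ((∑ j' ∈ Icc 1 (j - 1), (f (2 * m * j' - m + s) - f (2 * m * j' - m - s)))
          + ∑ j' ∈ Icc j p, (f (2 * m * j' - m + s + 1) - f (2 * m * j' - m - s))) *
          f (2 * m * j - m + s), sum_comm (s := Icc 1 p)]
  refine sum_congr rfl fun s _ => ?_
  simp only [add_mul, sum_add_distrib]
  congr 1
  · simp only [blockPrefixSum, ← sum_sub_distrib, block]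
    ring_nf
  · rw [sum_sum_Icc_right_mul
      (fun j' => f (2 * m * j' - m + (m - s) + 1) - f (2 * m * j' - m - (m - s)))]
    refine sum_congr rfl fun j hj => ?_
    rw [← sum_Icc_block f m (mem_Icc.1 hj).1]
    simp only [block]
    ring_nf

end Terms

section BlockIdentity

lemma sum_diff_add_sum_diff_reflect {G : Type*} [AddCommGroup G] (x : ℤ → G) {m : ℕ} (hm : 0 < m) :
    ∑ s ∈ Icc 1 (m - 1), (x (2 * m - s + 1) - x (2 * m - s) + (x (s + 1) - x s)) =
      x (2 * m) - x (m + 1) + (x m - x 1) := by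
  have h_tele := sum_Icc_one_sub (fun s => x s - x (2 * m - s + 1)) (m - 1)
  have h_top : ((m - 1 : ℕ) : ℤ) + 1 = m := by omega
  rw [h_top] at h_tele
  calc _ = _ := sum_congr rfl fun s _ => ?_
    _ = _ := h_tele
    _ = _ := ?_
  · rw [show (2 * m - (s + 1) + 1 : ℤ) = 2 * m - s by ring]
    abel
  · rw [show (2 * m - m + 1 : ℤ) = m + 1 by ring, sub_add_cancel]
    abel

lemma sum_block_terms_eq_blockForm {R : Type*} [CommRing R] {m : ℕ} (hm : 0 < m) (x Y : ℤ → R) :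
    ∑ k ∈ Icc 1 m, (x (2 * m - k + 1) - x (2 * m - k)) * (Y k + x k - Y (2 * m))
      - ∑ s ∈ Icc 1 (m - 1), (x (s + 1) - x s) * (Y (2 * m) - Y (2 * m - s))
      + (x (2 * m) - x 1) * Y (2 * m)
      + ∑ s ∈ Icc 1 (m - 1), ((Y (2 * m - s) + x (2 * m - s) - (Y s + x s)) * x s
        + (x (2 * m - s) - x (s + 1)) * Y s)
      - (x (m + 1) - x m) * (Y m + x m)
      - ∑ s ∈ Icc 1 (m - 1), ((Y (2 * m - s) - Y s) * x (2 * m - s)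
        + (x (2 * m - s + 1) - x s) * (Y (2 * m - s) + x (2 * m - s)))
      + ∑ s ∈ Icc 1 (m - 1), x s * (x s - x (s + 1)) = blockForm m x Y := by
  have h_last : ∑ k ∈ Icc 1 m, (x (2 * m - k + 1) - x (2 * m - k)) * (Y k + x k - Y (2 * m)) =
      ∑ k ∈ Icc 1 (m - 1), (x (2 * m - k + 1) - x (2 * m - k)) * (Y k + x k - Y (2 * m))
        + (x (m + 1) - x m) * (Y m + x m - Y (2 * m)) := by
    obtain ⟨k, rfl⟩ : ∃ k, m = k + 1 := ⟨m - 1, by omega⟩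
    rw [sum_Icc_succ_top (by omega), Nat.add_sub_cancel, two_mul, add_sub_cancel_right]
  have h_summand :
      ∑ k ∈ Icc 1 (m - 1), (x (2 * m - k + 1) - x (2 * m - k)) * (Y k + x k - Y (2 * m))
      - ∑ s ∈ Icc 1 (m - 1), (x (s + 1) - x s) * (Y (2 * m) - Y (2 * m - s))
      + ∑ s ∈ Icc 1 (m - 1), ((Y (2 * m - s) + x (2 * m - s) - (Y s + x s)) * x s
        + (x (2 * m - s) - x (s + 1)) * Y s)
      - ∑ s ∈ Icc 1 (m - 1), ((Y (2 * m - s) - Y s) * x (2 * m - s)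
        + (x (2 * m - s + 1) - x s) * (Y (2 * m - s) + x (2 * m - s)))
      + ∑ s ∈ Icc 1 (m - 1), x s * (x s - x (s + 1)) =
      blockForm m x Y - Y (2 * m) *
        ∑ s ∈ Icc 1 (m - 1), (x (2 * m - s + 1) - x (2 * m - s) + (x (s + 1) - x s)) := by
    simp only [blockForm, mul_sum, ← sum_sub_distrib, ← sum_add_distrib]
    exact sum_congr rfl fun s _ => by ring
  rw [sum_diff_add_sum_diff_reflect x hm] at h_summand
  linear_combination h_last + h_summand

end BlockIdentity

section Diagonal

variable {K : Type*} [Field K] [NeZero (2 : K)]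

lemma half_mul_diff_mul_diff_add_one (a b : K) :
    1 / 2 * ((b - a) * (b - a + 1)) = b * (b + 1) / 2 - a * (a + 1) / 2 + a * (a - b) := by
  field_simp
  ring

lemma diagonal_eq {m : ℕ} (hm : 2 ≤ m) (x : ℤ → K) :
    x 1 * (x 1 + 1) / 2 + x (m - 1) * (x (m - 1) - 1) / 2 - x m * x (m - 1)
        + 1 / 2 * ∑ s ∈ Icc 2 (m - 1), (x s - x (s - 1)) * (x s - x (s - 1) + 1) =
      ∑ s ∈ Icc 1 (m - 1), x s * (x s - x (s + 1)) := by
  obtain ⟨k, rfl⟩ := Nat.exists_eq_add_of_le' hm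
  have h_sum : 1 / 2 * ∑ s ∈ Icc 2 (k + 1), (x s - x (s - 1)) * (x s - x (s - 1) + 1) =
      x (k + 1) * (x (k + 1) + 1) / 2 - x 1 * (x 1 + 1) / 2
        + ∑ s ∈ Icc 1 k, x s * (x s - x (s + 1)) := by
    rw [sum_Icc_two, mul_sum, Nat.add_sub_cancel,
      ← sum_Icc_one_sub (fun s => x s * (x s + 1) / 2), ← sum_add_distrib]
    refine sum_congr rfl fun s _ => ?_
    push_cast
    rw [add_sub_cancel_right, half_mul_diff_mul_diff_add_one]
  have h_half : x (k + 1) * (x (k + 1) + 1) / 2 + x (k + 1) * (x (k + 1) - 1) / 2 =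
      x (k + 1) * x (k + 1) := by
    field_simp
    ring
  have h_pred : ((k + 2 : ℕ) : ℤ) - 1 = k + 1 := by push_cast; ring
  have h_top : ((k + 2 : ℕ) : ℤ) = k + 1 + 1 := by push_cast; ring
  rw [show k + 2 - 1 = k + 1 from rfl, h_sum, sum_Icc_succ_top (by omega), h_pred, h_top]
  push_cast
  linear_combination h_half

lemma sum_diagonal {m : ℕ} (hm : 2 ≤ m) (f : ℤ → K) (p : ℕ) :
    ∑ j ∈ Icc 1 p, f (2 * m * j - 2 * m + 1) * f (2 * m * j - 2 * m)
      + ∑ j ∈ Icc 1 p,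
          (f (2 * m * j - 2 * m + 1) * (f (2 * m * j - 2 * m + 1) + 1) / 2
            - f (2 * m * j - 2 * m + 1) * f (2 * m * j - 2 * m)
            + f (2 * m * j - m - 1) * (f (2 * m * j - m - 1) - 1) / 2
            - f (2 * m * j - m) * f (2 * m * j - m - 1)
            + 1 / 2 * ∑ s ∈ Icc 2 (m - 1),
                (f (2 * m * j - 2 * m + s) - f (2 * m * j - 2 * m + s - 1)) *
                  (f (2 * m * j - 2 * m + s) - f (2 * m * j - 2 * m + s - 1) + 1)) =
      ∑ j ∈ Icc 1 p, ∑ s ∈ Icc 1 (m - 1),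
        block f m j s * (block f m j s - block f m j (s + 1)) := by
  rw [← sum_add_distrib]
  refine sum_congr rfl fun j _ => ?_
  have h_mid : f (2 * m * j - m) = block f m j m := congrArg f (by ring)
  have h_pred_mid : f (2 * m * j - m - 1) = block f m j (m - 1) := congrArg f (by ring)
  rw [← diagonal_eq hm, h_mid, h_pred_mid]
  simp only [block, add_sub_assoc]
  ring

end Diagonal

theorem quadratic_identity_neg_pos_general {K : Type*} [Field K] [NeZero (2 : K)]
    (m p : ℕ) (hm : 2 ≤ m) (f : ℤ → K) (h0 : f 0 = 0) :
    (∑ k ∈ Icc 1 m, ∑ j ∈ Icc 1 p, ∑ j' ∈ Icc 1 j,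
        (f (2 * m * j - k + 1) - f (2 * m * j - k)) *
          (f (2 * m * j' - 2 * m + k) - f (2 * m * j' - 2 * m))
      - ∑ s ∈ Icc 1 (m - 1), ∑ j ∈ Icc 2 p, ∑ j' ∈ Icc 2 j,
          (f (2 * m * j - m - s + 1) - f (2 * m * j - m - s)) *
            (f (2 * m * j' - 2 * m) - f (2 * m * j' - 3 * m + s))
      + ∑ j ∈ Icc 1 p, ∑ j' ∈ Icc j p,
          (f (2 * m * j') - f (2 * m * j' - 2 * m + 1)) * f (2 * m * j - 2 * m)
      + ∑ j ∈ Icc 1 p, f (2 * m * j - 2 * m + 1) * f (2 * m * j - 2 * m)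
      + ∑ s ∈ Icc 1 (m - 1), ∑ j ∈ Icc 1 p,
          ((∑ j' ∈ Icc 1 j, (f (2 * m * j' - s) - f (2 * m * j' - 2 * m + s)))
            + ∑ j' ∈ Icc (j + 1) p, (f (2 * m * j' - s) - f (2 * m * j' - 2 * m + s + 1))) *
            f (2 * m * j - 2 * m + s)
      - ∑ j ∈ Icc 1 p,
          (∑ j' ∈ Icc j p, (f (2 * m * j' - m + 1) - f (2 * m * j' - m))) *
            f (2 * m * j - m)
      - ∑ s ∈ Icc 1 (m - 1), ∑ j ∈ Icc 1 p,
          ((∑ j' ∈ Icc 1 (j - 1), (f (2 * m * j' - m + s) - f (2 * m * j' - m - s)))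
            + ∑ j' ∈ Icc j p, (f (2 * m * j' - m + s + 1) - f (2 * m * j' - m - s))) *
            f (2 * m * j - m + s))
    + ∑ j ∈ Icc 1 p,
        (f (2 * m * j - 2 * m + 1) * (f (2 * m * j - 2 * m + 1) + 1) / 2
          - f (2 * m * j - 2 * m + 1) * f (2 * m * j - 2 * m)
          + f (2 * m * j - m - 1) * (f (2 * m * j - m - 1) - 1) / 2
          - f (2 * m * j - m) * f (2 * m * j - m - 1)
          + 1 / 2 * ∑ s ∈ Icc 2 (m - 1),
              (f (2 * m * j - 2 * m + s) - f (2 * m * j - 2 * m + s - 1)) *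
                (f (2 * m * j - 2 * m + s) - f (2 * m * j - 2 * m + s - 1) + 1))
    = ∑ i ∈ (Icc 1 (2 * m * p)).filter (fun i => ¬ m ∣ i),
        ∑ j ∈ Icc (i + 1) (2 * m * p), (deltaLO m i j : K) * f i * f j := by
  have hm₀ : 0 < m := by omega
  have h_blocks := sum_congr (rfl : Icc 1 p = Icc 1 p) fun j _ =>
    sum_block_terms_eq_blockForm hm₀ (block f m j) (blockPrefixSum f m j)
  simp only [sum_add_distrib (s := Icc 1 p), sum_sub_distrib (s := Icc 1 p)] at h_blocks
  rw [sum_deltaLO_eq_sum_blockForm f hm₀, ← h_blocks, ← sum_diagonal hm,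
    sum_upper_diff_mul_lower f m p h0, sum_lower_diff_mul_upper, sum_span_mul_zeroth f m p h0,
    sum_mul_lower, sum_mul_middle, sum_mul_upper]
  ring

/-- The key quadratic identity (3.32) = (3.33) in the proof of Theorem 1.2. -/
theorem quadratic_identity_neg_pos
    (m p : ℕ) (hm : 2 ≤ m) (hp : 0 < p) (n : ℤ → ℤ)
    (h0 : ∀ s : ℤ, s ≤ 0 → n s = 0) :
    ((∑ k ∈ Icc 1 m, ∑ j ∈ Icc 1 p, ∑ j' ∈ Icc 1 j,
        (n (2 * m * j - k + 1) - n (2 * m * j - k)) *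
          (n (2 * m * j' - 2 * m + k) - n (2 * m * j' - 2 * m))
      - ∑ s ∈ Icc 1 (m - 1), ∑ j ∈ Icc 2 p, ∑ j' ∈ Icc 2 j,
          (n (2 * m * j - m - s + 1) - n (2 * m * j - m - s)) *
            (n (2 * m * j' - 2 * m) - n (2 * m * j' - 3 * m + s))
      + ∑ j ∈ Icc 1 p, ∑ j' ∈ Icc j p,
          (n (2 * m * j') - n (2 * m * j' - 2 * m + 1)) * n (2 * m * j - 2 * m)
      + ∑ j ∈ Icc 1 p, n (2 * m * j - 2 * m + 1) * n (2 * m * j - 2 * m)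
      + ∑ s ∈ Icc 1 (m - 1), ∑ j ∈ Icc 1 p,
          ((∑ j' ∈ Icc 1 j, (n (2 * m * j' - s) - n (2 * m * j' - 2 * m + s)))
            + ∑ j' ∈ Icc (j + 1) p, (n (2 * m * j' - s) - n (2 * m * j' - 2 * m + s + 1))) *
            n (2 * m * j - 2 * m + s)
      - ∑ j ∈ Icc 1 p,
          (∑ j' ∈ Icc j p, (n (2 * m * j' - m + 1) - n (2 * m * j' - m))) *
            n (2 * m * j - m)
      - ∑ s ∈ Icc 1 (m - 1), ∑ j ∈ Icc 1 p,
          ((∑ j' ∈ Icc 1 (j - 1), (n (2 * m * j' - m + s) - n (2 * m * j' - m - s)))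
            + ∑ j' ∈ Icc j p, (n (2 * m * j' - m + s + 1) - n (2 * m * j' - m - s))) *
            n (2 * m * j - m + s) : ℤ) : ℚ)
    + ∑ j ∈ Icc 1 p,
        ((n (2 * m * j - 2 * m + 1) : ℚ) * ((n (2 * m * j - 2 * m + 1) : ℚ) + 1) / 2
          - (n (2 * m * j - 2 * m + 1) : ℚ) * (n (2 * m * j - 2 * m) : ℚ)
          + (n (2 * m * j - m - 1) : ℚ) * ((n (2 * m * j - m - 1) : ℚ) - 1) / 2
          - (n (2 * m * j - m) : ℚ) * (n (2 * m * j - m - 1) : ℚ)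
          + (1 / 2 : ℚ) * ∑ s ∈ Icc 2 (m - 1),
              ((n (2 * m * j - 2 * m + s) : ℚ) - (n (2 * m * j - 2 * m + s - 1) : ℚ)) *
                ((n (2 * m * j - 2 * m + s) : ℚ) - (n (2 * m * j - 2 * m + s - 1) : ℚ) + 1))
    = ((∑ i ∈ (Icc 1 (2 * m * p)).filter (fun i => ¬ m ∣ i),
          ∑ j ∈ Icc (i + 1) (2 * m * p), deltaLO m i j * n i * n j : ℤ) : ℚ) := by
  have h := quadratic_identity_neg_pos_general m p hm (fun s => (n s : ℚ)) (by simp [h0 0 le_rfl])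
  exact_mod_cast h

end
end
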